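/- arXiv:1910.01512 — 7 statements merged into one kernel-verified Lean document; each statement's English description precedes it below -/
import Mathlib

section
/- Let n ≥ 2 be an integer and let F : [0,∞) × [0,∞) → [0,∞] be a measurable function. Then ∫_{ℝⁿ₊} F(|x′|, xₙ)·x₁⁴ dx = (3·ω_{n−2} / ((n−1)(n+1)·ω_{n+2})) · ∫_{ℝ^{n+4}₊} F(|y′|, y_{n+4}) dy, where for x ∈ ℝⁿ we write x′ = (x₁,…,x_{n−1}) and for y ∈ ℝ^{n+4} we write y′ = (y₁,…,y_{n+3}). -/
/-!
Write `m = n - 1` and slice both half-spaces by the last coordinate. By Tonelli it is enough to show,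
for every measurable `G : ℝ → [0,∞]` (namely `G = F(·, t)`),
`∫_{ℝᵐ} u₀⁴ G(|u|) du = 3 / (4π²) · ∫_{ℝ^{m+4}} G(|v|) dv`.

In polar coordinates (`exists_polar_const`) both sides are constants, independent of `G`, times the
same one-dimensional integral `∫₀^∞ r^{m+3} G(r) dr`, because `u₀⁴` is homogeneous of degree `4`.
The ratio of the constants can therefore be read off from the single function `G(r) = exp(-r²)`,
where both sides factor into one-dimensional Gaussian integrals: they are
`(3/4) √π · √π ^ (m-1)` and `√π ^ (m+4)`. Finally `3 / (4π²)` agrees with the constant in terms of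
sphere volumes by the functional equation of the Gamma function (`sphereVol_ratio`).
-/

open MeasureTheory Set

/-- `sphereVol k` is the `k`-dimensional volume of the unit sphere `S^k ⊂ ℝ^{k+1}`,
namely `ω_k = 2 π^{(k+1)/2} / Γ((k+1)/2)`. -/
noncomputable def sphereVol (k : ℕ) : ℝ :=
  2 * Real.pi ^ ((k + 1 : ℝ) / 2) / Real.Gamma ((k + 1 : ℝ) / 2)

/-- Polar coordinates for a homogeneous weight `a` of degree `d`: the weighted integral of a radial
function is a constant (the integral of `a` over the unit sphere) times a radial integral. -/
theorem exists_polar_const {E : Type*} [NormedAddCommGroup E] [NormedSpace ℝ E]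
    [MeasurableSpace E] [BorelSpace E] [FiniteDimensional ℝ E] [Nontrivial E]
    (μ : Measure E) [μ.IsAddHaarMeasure] (a : E → ENNReal) (ha : Measurable a) (d : ℕ)
    (hom : ∀ (r : ℝ) (x : E), 0 < r → a (r • x) = ENNReal.ofReal (r ^ d) * a x) :
    ∃ C : ENNReal, ∀ G : ℝ → ENNReal, Measurable G →
      ∫⁻ x, a x * G ‖x‖ ∂μ
        = C * ∫⁻ r in Ioi (0 : ℝ), ENNReal.ofReal (r ^ (Module.finrank ℝ E - 1 + d)) * G r := by
  refine ⟨∫⁻ θ : Metric.sphere (0 : E) 1, a θ ∂μ.toSphere, fun G hG => ?_⟩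
  have hm : Measurable fun r : Ioi (0 : ℝ) => ENNReal.ofReal (r.1 ^ d) * G r.1 := by fun_prop
  calc
    ∫⁻ x, a x * G ‖x‖ ∂μ
      = ∫⁻ x : ({(0)}ᶜ : Set E), a x.1 * G ‖x.1‖ ∂(μ.comap (↑)) := by
      rw [lintegral_subtype_comap (measurableSet_singleton _).compl fun x ↦ a x * G ‖x‖,
        restrict_compl_singleton]
    _ = ∫⁻ p, a p.1 * (ENNReal.ofReal (p.2.1 ^ d) * G p.2.1)
          ∂μ.toSphere.prod (.volumeIoiPow (Module.finrank ℝ E - 1)) := by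
      rw [← μ.measurePreserving_homeomorphUnitSphereProd.lintegral_comp_emb
        (Homeomorph.measurableEmbedding _)]
      refine lintegral_congr fun x => ?_
      have hx : 0 < ‖x.1‖ := norm_pos_iff.2 x.2
      have h := hom ‖x.1‖ (‖x.1‖⁻¹ • x.1) hx
      rw [smul_inv_smul₀ hx.ne'] at h
      simp only [homeomorphUnitSphereProd_apply_snd_coe, homeomorphUnitSphereProd_apply_fst_coe]
      rw [h]
      ring
    _ = (∫⁻ θ : Metric.sphere (0 : E) 1, a θ ∂μ.toSphere)
          * ∫⁻ r : Ioi (0 : ℝ), ENNReal.ofReal (r.1 ^ d) * G r.1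
            ∂.volumeIoiPow (Module.finrank ℝ E - 1) :=
      lintegral_prod_mul (f := fun θ : Metric.sphere (0 : E) 1 => a θ)
        (by fun_prop) hm.aemeasurable
    _ = _ := by
      congr 1
      rw [Measure.volumeIoiPow, lintegral_withDensity_eq_lintegral_mul _ (by fun_prop) hm,
        ← lintegral_subtype_comap measurableSet_Ioi]
      refine lintegral_congr fun r => ?_
      have hr : (0 : ℝ) < r.1 := r.2
      simp only [Pi.mul_apply]
      rw [← mul_assoc, ← ENNReal.ofReal_mul (by positivity), ← pow_add]

/-! ### Gaussian integrals -/

theorem lintegral_fin_succ_mul (m : ℕ) (g : ℝ → ENNReal) (h : (Fin m → ℝ) → ENNReal)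
    (hg : Measurable g) (hh : Measurable h) :
    ∫⁻ u : Fin (m + 1) → ℝ, g (u 0) * h (fun i => u i.succ) = (∫⁻ t, g t) * ∫⁻ v, h v := by
  rw [← lintegral_prod_mul hg.aemeasurable hh.aemeasurable, ← Measure.volume_eq_prod,
    ← (volume_preserving_piFinSuccAbove (fun _ : Fin (m + 1) => ℝ) 0).lintegral_comp_emb
      (MeasurableEquiv.measurableEmbedding _)]
  rfl

theorem lintegral_gauss_one :
    ∫⁻ t : ℝ, ENNReal.ofReal (Real.exp (-t ^ 2)) = ENNReal.ofReal (Real.sqrt Real.pi) := by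
  have h := integral_gaussian 1
  have hi := integrable_exp_neg_mul_sq (b := 1) one_pos
  simp only [neg_mul, one_mul, div_one] at h hi
  rw [← ofReal_integral_eq_lintegral_ofReal hi (.of_forall fun _ => (Real.exp_pos _).le), h]

theorem lintegral_gauss_fourth_moment :
    ∫⁻ t : ℝ, ENNReal.ofReal (t ^ 4) * ENNReal.ofReal (Real.exp (-t ^ 2))
      = ENNReal.ofReal (3 / 4 * Real.sqrt Real.pi) := by
  have hi := integrable_rpow_mul_exp_neg_mul_sq (b := 1) one_pos (s := 4) (by norm_num)
  have h := integral_rpow_mul_exp_neg_mul_rpow (p := 2) (q := 4) (b := 1) two_pos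
    (by norm_num) one_pos
  have h' := integral_comp_abs (f := fun t : ℝ => t ^ 4 * Real.exp (-t ^ 2))
  have h4 : ∀ t : ℝ, t ^ (4 : ℝ) = t ^ 4 := fun t => by norm_cast
  have h2 : ∀ t : ℝ, t ^ (2 : ℝ) = t ^ 2 := fun t => by norm_cast
  have he : ∀ t : ℝ, |t| ^ 4 = t ^ 4 := fun t => Even.pow_abs (by decide) t
  simp only [neg_mul, one_mul, h4, h2] at h hi
  simp only [sq_abs, he] at h'
  have hG : Real.Gamma ((4 + 1) / 2) = 3 / 4 * Real.sqrt Real.pi := by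
    have := Real.Gamma_nat_add_half 2
    norm_num [Nat.doubleFactorial] at this ⊢
    rw [this]; ring
  rw [h, Real.one_rpow, hG] at h'
  have hm : ∀ t : ℝ, ENNReal.ofReal (t ^ 4) * ENNReal.ofReal (Real.exp (-t ^ 2))
      = ENNReal.ofReal (t ^ 4 * Real.exp (-t ^ 2)) :=
    fun t => (ENNReal.ofReal_mul (by positivity)).symm
  simp_rw [hm]
  rw [← ofReal_integral_eq_lintegral_ofReal hi
    (.of_forall fun t => show 0 ≤ t ^ 4 * Real.exp (-t ^ 2) by positivity), h']
  congr 1; ring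

theorem lintegral_gauss_pi (m : ℕ) :
    ∫⁻ u : Fin m → ℝ, ENNReal.ofReal (Real.exp (-∑ i, u i ^ 2))
      = ENNReal.ofReal (Real.sqrt Real.pi) ^ m := by
  induction m with
  | zero => simp [lintegral_unique, volume_pi]
  | succ m ih =>
    have := lintegral_fin_succ_mul m (fun t => ENNReal.ofReal (Real.exp (-t ^ 2)))
      (fun v => ENNReal.ofReal (Real.exp (-∑ i, v i ^ 2))) (by fun_prop) (by fun_prop)
    rw [ih, lintegral_gauss_one, ← pow_succ'] at this
    rw [← this]
    refine lintegral_congr fun u => ?_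
    rw [← ENNReal.ofReal_mul (Real.exp_pos _).le, ← Real.exp_add, Fin.sum_univ_succ, neg_add]

theorem lintegral_fourth_mul_gauss_pi (m : ℕ) :
    ∫⁻ u : Fin (m + 1) → ℝ,
        ENNReal.ofReal (u 0 ^ 4) * ENNReal.ofReal (Real.exp (-∑ i, u i ^ 2))
      = ENNReal.ofReal (3 / 4 * Real.sqrt Real.pi) * ENNReal.ofReal (Real.sqrt Real.pi) ^ m := by
  rw [← lintegral_gauss_fourth_moment, ← lintegral_gauss_pi,
    ← lintegral_fin_succ_mul m _ _ (by fun_prop) (by fun_prop)]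
  refine lintegral_congr fun u => ?_
  rw [mul_assoc, ← ENNReal.ofReal_mul (Real.exp_pos _).le, ← Real.exp_add, Fin.sum_univ_succ,
    neg_add]

/-! ### The identity on horizontal slices -/

theorem lintegral_euclidean (m : ℕ) (f : (Fin m → ℝ) → ENNReal) :
    ∫⁻ x : EuclideanSpace ℝ (Fin m), f x.ofLp = ∫⁻ u, f u :=
  (EuclideanSpace.volume_preserving_symm_measurableEquiv_toLp (Fin m)).lintegral_comp_emb
    (MeasurableEquiv.measurableEmbedding _) f

/-- The identity for one value of the last coordinate, with the constant in closed form. -/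
theorem lintegral_fourth_mul_radial (m : ℕ) (G : ℝ → ENNReal) (hG : Measurable G) :
    ∫⁻ u : Fin (m + 1) → ℝ, ENNReal.ofReal (u 0 ^ 4) * G (Real.sqrt (∑ i, u i ^ 2))
      = ENNReal.ofReal (3 / (4 * Real.pi ^ 2))
          * ∫⁻ v : Fin (m + 5) → ℝ, G (Real.sqrt (∑ i, v i ^ 2)) := by
  obtain ⟨C₁, h₁⟩ := exists_polar_const (volume : Measure (EuclideanSpace ℝ (Fin (m + 1))))
    (fun x => ENNReal.ofReal (x 0 ^ 4)) (by fun_prop) 4 (fun r x hr => by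
      rw [← ENNReal.ofReal_mul (by positivity), ← mul_pow]; rfl)
  obtain ⟨C₂, h₂⟩ := exists_polar_const (volume : Measure (EuclideanSpace ℝ (Fin (m + 5))))
    (fun _ => 1) (by fun_prop) 0 (fun r x hr => by simp)
  simp only [EuclideanSpace.norm_eq, Real.norm_eq_abs, sq_abs, finrank_euclideanSpace,
    Fintype.card_fin, one_mul, add_zero, Nat.add_sub_cancel,
    show m + 5 - 1 = m + 4 from rfl] at h₁ h₂
  replace h₁ := fun G hG => (lintegral_euclidean (m + 1) fun u =>
    ENNReal.ofReal (u 0 ^ 4) * G (Real.sqrt (∑ i, u i ^ 2))).symm.trans (h₁ G hG)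
  replace h₂ := fun G hG => (lintegral_euclidean (m + 5) fun u =>
    G (Real.sqrt (∑ i, u i ^ 2))).symm.trans (h₂ G hG)
  have hE : Measurable fun r : ℝ => ENNReal.ofReal (Real.exp (-r ^ 2)) := by fun_prop
  have g₁ := h₁ _ hE
  have g₂ := h₂ _ hE
  have hs : ∀ {k : ℕ} (u : Fin k → ℝ), Real.sqrt (∑ i, u i ^ 2) ^ 2 = ∑ i, u i ^ 2 :=
    fun u => Real.sq_sqrt (Finset.sum_nonneg fun i _ => sq_nonneg _)
  simp only [hs] at g₁ g₂
  -- Both polar constants multiply the same radial integral, so a Gaussian fixes their ratio.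
  rw [lintegral_fourth_mul_gauss_pi] at g₁
  rw [lintegral_gauss_pi] at g₂
  rw [h₁ G hG, h₂ G hG, ← mul_assoc]
  congr 1
  set K := ∫⁻ r in Ioi (0 : ℝ), ENNReal.ofReal (r ^ (m + 4)) * ENNReal.ofReal (Real.exp (-r ^ 2))
  have hpi : 0 < Real.sqrt Real.pi := Real.sqrt_pos.2 Real.pi_pos
  have hA0 : C₂ * K ≠ 0 := by
    rw [← g₂]; exact pow_ne_zero _ (ENNReal.ofReal_pos.2 hpi).ne'
  have hAt : C₂ * K ≠ ⊤ := by
    rw [← g₂]; exact ENNReal.pow_ne_top ENNReal.ofReal_ne_top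
  have hK0 : K ≠ 0 := right_ne_zero_of_mul hA0
  have hKt : K ≠ ⊤ := fun h => hAt (by rw [h, ENNReal.mul_top (left_ne_zero_of_mul hA0)])
  rw [← ENNReal.mul_left_inj hK0 hKt, mul_assoc, ← g₁, ← g₂, ← ENNReal.ofReal_pow hpi.le,
    ← ENNReal.ofReal_pow hpi.le, ← ENNReal.ofReal_mul (by positivity),
    ← ENNReal.ofReal_mul (by positivity)]
  congr 1
  have h4 : Real.sqrt Real.pi ^ 4 = Real.pi ^ 2 := by
    rw [show 4 = 2 * 2 from rfl, pow_mul, Real.sq_sqrt Real.pi_pos.le]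
  rw [show m + 5 = m + 1 + 4 from rfl, pow_add _ (m + 1) 4, h4]
  have := Real.pi_pos
  field_simp
  rw [pow_succ']

/-- Tonelli on the open half-space, with the last coordinate as the outer variable. -/
theorem lintegral_slice (k : ℕ) (Φ : (Fin k → ℝ) → ℝ → ENNReal)
    (hΦ : Measurable (Function.uncurry Φ)) :
    ∫⁻ x in {x : EuclideanSpace ℝ (Fin (k + 1)) | 0 < x (Fin.last k)},
        Φ (fun i => x i.castSucc) (x (Fin.last k))
      = ∫⁻ t in Ioi (0 : ℝ), ∫⁻ u, Φ u t := by
  have hS : MeasurableSet {x : EuclideanSpace ℝ (Fin (k + 1)) | 0 < x (Fin.last k)} :=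
    measurableSet_lt measurable_const (by fun_prop)
  rw [← lintegral_indicator hS, ← lintegral_indicator measurableSet_Ioi]
  set Ψ : ℝ × (Fin k → ℝ) → ENNReal :=
    (Prod.fst ⁻¹' Ioi (0 : ℝ)).indicator fun p => Φ p.2 p.1 with hΨ
  have hΨm : Measurable Ψ :=
    (hΦ.comp measurable_swap).indicator (measurable_fst measurableSet_Ioi)
  calc
    _ = ∫⁻ x : EuclideanSpace ℝ (Fin (k + 1)),
          (fun u : Fin (k + 1) → ℝ => Ψ (u (Fin.last k), fun i => u i.castSucc)) x.ofLp := rfl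
    _ = ∫⁻ u : Fin (k + 1) → ℝ, Ψ (u (Fin.last k), fun i => u i.castSucc) :=
      lintegral_euclidean (k + 1) fun u => Ψ (u (Fin.last k), fun i => u i.castSucc)
    _ = ∫⁻ p, Ψ p := by
      rw [← (volume_preserving_piFinSuccAbove (fun _ : Fin (k + 1) => ℝ)
        (Fin.last k)).lintegral_comp_emb (MeasurableEquiv.measurableEmbedding _)]
      refine lintegral_congr fun u => ?_
      congr 1
      simp [MeasurableEquiv.piFinSuccAbove]
      rfl
    _ = ∫⁻ t, ∫⁻ u, Ψ (t, u) := by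
      rw [Measure.volume_eq_prod, lintegral_prod _ hΨm.aemeasurable]
    _ = _ := by
      refine lintegral_congr fun t => ?_
      by_cases ht : 0 < t <;> simp [hΨ, indicator, ht]

theorem sphereVol_ratio (m : ℕ) :
    3 * sphereVol m / ((((m + 2 : ℕ) : ℝ) - 1) * (((m + 2 : ℕ) : ℝ) + 1) * sphereVol (m + 4))
      = 3 / (4 * Real.pi ^ 2) := by
  set s : ℝ := ((m : ℝ) + 1) / 2 with hs
  have hs0 : 0 < s := by positivity
  have e : (((m + 4 : ℕ) : ℝ) + 1) / 2 = s + 1 + 1 := by rw [hs]; push_cast; ring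
  have em : (m : ℝ) = 2 * s - 1 := by rw [hs]; ring
  have hΓ := Real.Gamma_pos_of_pos hs0
  have hp := Real.pi_pos
  have hps : 0 < Real.pi ^ s := Real.rpow_pos_of_pos hp _
  rw [sphereVol, sphereVol, e, ← hs, Real.Gamma_add_one (by positivity),
    Real.Gamma_add_one hs0.ne', Real.rpow_add_one hp.ne', Real.rpow_add_one hp.ne']
  push_cast
  rw [em]
  have h1 : 2 * s - 1 + 2 - 1 ≠ 0 := by linarith
  have h2 : 2 * s - 1 + 2 + 1 ≠ 0 := by linarith
  field_simp
  ring

/-- Change of variables: for measurable `F : [0,∞) × [0,∞) → [0,∞]`,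
`∫_{ℝⁿ₊} F(|x'|, xₙ) x₁⁴ dx = (3 ω_{n−2} / ((n−1)(n+1) ω_{n+2})) ∫_{ℝ^{n+4}₊} F(|y'|, y_{n+4}) dy`. -/
theorem change_of_variables (n : ℕ) (hn : 2 ≤ n) (F : ℝ → ℝ → ENNReal)
    (hF : Measurable (Function.uncurry F)) :
    ∫⁻ x in {x : EuclideanSpace ℝ (Fin n) | 0 < x ⟨n - 1, by omega⟩},
        ENNReal.ofReal ((x ⟨0, by omega⟩) ^ 4)
          * F (Real.sqrt (∑ i : Fin (n - 1), (x ⟨i.1, by have := i.isLt; omega⟩) ^ 2))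
              (x ⟨n - 1, by omega⟩)
      = ENNReal.ofReal
            (3 * sphereVol (n - 2) / (((n : ℝ) - 1) * ((n : ℝ) + 1) * sphereVol (n + 2)))
          * ∫⁻ y in {y : EuclideanSpace ℝ (Fin (n + 4)) | 0 < y ⟨n + 3, by omega⟩},
              F (Real.sqrt (∑ i : Fin (n + 3), (y ⟨i.1, by have := i.isLt; omega⟩) ^ 2))
                (y ⟨n + 3, by omega⟩) := by
  obtain ⟨m, rfl⟩ : ∃ m, n = m + 2 := ⟨n - 2, by omega⟩
  have hL : Measurable (Function.uncurry fun (u : Fin (m + 1) → ℝ) (t : ℝ) =>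
      ENNReal.ofReal (u 0 ^ 4) * F (Real.sqrt (∑ i, u i ^ 2)) t) := by
    refine Measurable.mul (by fun_prop) (hF.comp (f := fun p : (Fin (m + 1) → ℝ) × ℝ =>
      (Real.sqrt (∑ i, p.1 i ^ 2), p.2)) (by fun_prop))
  have hR : Measurable (Function.uncurry fun (u : Fin (m + 5) → ℝ) (t : ℝ) =>
      F (Real.sqrt (∑ i, u i ^ 2)) t) :=
    hF.comp (f := fun p : (Fin (m + 5) → ℝ) × ℝ =>
      (Real.sqrt (∑ i, p.1 i ^ 2), p.2)) (by fun_prop)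
  have key : ∫⁻ t in Ioi (0 : ℝ), ∫⁻ u : Fin (m + 1) → ℝ,
        ENNReal.ofReal (u 0 ^ 4) * F (Real.sqrt (∑ i, u i ^ 2)) t
      = ENNReal.ofReal (3 / (4 * Real.pi ^ 2))
        * ∫⁻ t in Ioi (0 : ℝ), ∫⁻ u : Fin (m + 5) → ℝ, F (Real.sqrt (∑ i, u i ^ 2)) t := by
    rw [← lintegral_const_mul' _ _ ENNReal.ofReal_ne_top]
    refine lintegral_congr fun t => ?_
    exact lintegral_fourth_mul_radial m (fun r => F r t) (hF.comp measurable_prodMk_right)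
  rw [← lintegral_slice _ _ hL, ← lintegral_slice _ _ hR, ← sphereVol_ratio] at key
  exact key
end

section
/- Let n ≥ 2 be an integer. For i = 1, 2, let φᵢ : [0,∞) × [0,∞) → [0,∞) be continuous functions satisfying φᵢ(r,s) ≤ C(1 + r + s)^{−n−3} for some constant C, and let ũᵢ : {x ∈ ℝ^{n+4} : x_{n+4} ≥ 0} → ℝ be continuous functions, twice continuously differentiable on the open half-space ℝ^{n+4}₊, radially symmetric in the variables (x₁,…,x_{n+3}), satisfying −Δũᵢ(x) = φᵢ(|x′|, x_{n+4}) for all x ∈ ℝ^{n+4}₊ (with x′ = (x₁,…,x_{n+3})), ũᵢ(x) = 0 whenever x_{n+4} = 0, and the decay bounds |ũᵢ(x)| ≤ C(1+|x|)^{−n−2} and |∇ũᵢ(x)| ≤ C(1+|x|)^{−n−3} for all x. Define uᵢ(r,s) = ũᵢ(r, 0, …, 0, s). Then ∫_{ℝⁿ₊} φ₁(|x′|, xₙ)·u₂(|x′|, xₙ)·x₁⁴ dx = ∫_{ℝⁿ₊} φ₂(|x′|, xₙ)·u₁(|x′|, xₙ)·x₁⁴ dx, where for x ∈ ℝⁿ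 we write x′ = (x₁,…,x_{n−1}). -/
/-!
Write `n = k + 2`. Both sides are integrals of functions of `(|x'|, x_n)` only, apart from the
weight `x₁⁴`. In polar coordinates in the horizontal variables `x' ∈ ℝ^{k+1}`, the weight `x₁⁴`
contributes a spherical constant and a factor `r⁴`, so the radial density is `r^{k+4}`: the one
of the unweighted Lebesgue measure on `ℝ^{k+5}`. Hence, up to a constant factor independent of the
integrand (nonzero on the high-dimensional side), the weighted integral over the half-space of `ℝⁿ`
is the unweighted integral over the half-space of `ℝ^{n+4}` (`map_norm_withDensity`, `map_cyl`,
`integral_cyl`). Radial symmetry turns the latter integrand into `φ₁(|x'|, x_{n+4}) ũ₂(x)`, which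
is `-ũ₂ Δũ₁`, and the claim becomes Green's identity `∫ ũ₂ Δũ₁ = ∫ ũ₁ Δũ₂` on that half-space.

Green's identity (`green_halfSpace`) is proved with cutoffs `ψ_k` compactly supported in the open
half-space: the divergence of `ψ_k (ũ₁ ∇ũ₂ - ũ₂ ∇ũ₁)` has integral zero, and it converges pointwise
to `ũ₁ Δũ₂ - ũ₂ Δũ₁`. Near the boundary `|∇ψ_k|` is of size `1 / x_m` (with `x_m` the last
coordinate), which is absorbed by the bound `|ũ| ≤ x_m sup |∇ũ|` coming from the Dirichlet
condition (`boundary_decay`). Dominated convergence with majorant `(1 + |x|)^{-(2n+5)}`, integrable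
in dimension `n + 4`, concludes.
-/
open MeasureTheory Set

/-- The Euclidean Laplacian `Δf = Σᵢ ∂²f/∂xᵢ²`. -/
noncomputable def laplacian {m : ℕ} (f : EuclideanSpace ℝ (Fin m) → ℝ)
    (x : EuclideanSpace ℝ (Fin m)) : ℝ :=
  ∑ i : Fin m, fderiv ℝ (fun y => fderiv ℝ f y (EuclideanSpace.single i 1)) x
    (EuclideanSpace.single i 1)

open Filter Topology

/-! ### Cutoff functions of the half-space -/

lemma exists_bound_deriv_smoothTransition : ∃ M : ℝ, ∀ t, |deriv Real.smoothTransition t| ≤ M := by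
  have hc : Continuous (deriv Real.smoothTransition) :=
    (Real.smoothTransition.contDiff (n := 1)).continuous_deriv (by simp)
  obtain ⟨M, hM⟩ := (isCompact_Icc (a := (0 : ℝ)) (b := 1)).exists_bound_of_continuousOn
    hc.continuousOn
  have h0 : 0 ≤ M := (norm_nonneg _).trans (hM 0 (by simp))
  refine ⟨M, fun t => ?_⟩
  by_cases ht : t ∈ Icc (0 : ℝ) 1
  · exact hM t ht
  · have : deriv Real.smoothTransition t = 0 := by
      rw [mem_Icc, not_and_or, not_le, not_le] at ht
      rcases ht with ht | ht
      · have : Real.smoothTransition =ᶠ[𝓝 t] fun _ => 0 := by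
          filter_upwards [Iio_mem_nhds ht] with s hs
          exact Real.smoothTransition.zero_of_nonpos (le_of_lt hs)
        rw [this.deriv_eq]; simp
      · have : Real.smoothTransition =ᶠ[𝓝 t] fun _ => 1 := by
          filter_upwards [Ioi_mem_nhds ht] with s hs
          exact Real.smoothTransition.one_of_one_le (le_of_lt hs)
        rw [this.deriv_eq]; simp
    simpa [this] using h0

/-- Cutoffs `ψ k x = a (k x_j) b (x / k)` exhausting the open half-space `x_j > 0`. The gradient bound
is uniform in `k`: the transition layer of `a (k x_j)` lies in `x_j ≤ 2 / k`, where the factor `k`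
produced by differentiation is at most `2 / x_j`. -/
lemma exists_cutoff {m : ℕ} (j : Fin m) :
    ∃ (ψ : ℕ → EuclideanSpace ℝ (Fin m) → ℝ) (M : ℝ), 0 ≤ M ∧
      (∀ k, ContDiff ℝ 1 (ψ k)) ∧ (∀ k, HasCompactSupport (ψ k)) ∧
      (∀ k, tsupport (ψ k) ⊆ {x | 0 < x j}) ∧ (∀ k x, |ψ k x| ≤ 1) ∧
      (∀ k x, 0 < x j → ‖fderiv ℝ (ψ k) x‖ ≤ M * (1 + 1 / x j)) ∧
      (∀ x, 0 < x j → ∀ᶠ k in atTop, ψ k =ᶠ[𝓝 x] fun _ => 1) := by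
  obtain ⟨M₁, hM₁⟩ := exists_bound_deriv_smoothTransition
  have hM₁0 : 0 ≤ M₁ := (abs_nonneg _).trans (hM₁ 0)
  let b : ContDiffBump (0 : EuclideanSpace ℝ (Fin m)) := ⟨1, 2, by norm_num, by norm_num⟩
  have hb : ContDiff ℝ 1 b := b.contDiff
  obtain ⟨M₂, hM₂⟩ := (b.hasCompactSupport.fderiv (𝕜 := ℝ)).exists_bound_of_continuous
    (hb.continuous_fderiv (by simp))
  have hM₂0 : 0 ≤ M₂ := (norm_nonneg _).trans (hM₂ 0)
  -- The scale is shifted by one so that it is at least `1` for every `k`.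
  let K : ℕ → ℝ := fun k => (k : ℝ) + 1
  have hK : ∀ k, 1 ≤ K k := fun k => by simp [K]
  have hK0 : ∀ k, 0 < K k := fun k => zero_lt_one.trans_le (hK k)
  let a : ℕ → EuclideanSpace ℝ (Fin m) → ℝ := fun k x => Real.smoothTransition (K k * x j - 1)
  let c : ℕ → EuclideanSpace ℝ (Fin m) → ℝ := fun k x => b ((K k)⁻¹ • x)
  have hst : ContDiff ℝ 1 Real.smoothTransition := Real.smoothTransition.contDiff (n := 1)
  have ha : ∀ k, ContDiff ℝ 1 (a k) := fun k => hst.comp (by fun_prop)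
  have hc : ∀ k, ContDiff ℝ 1 (c k) := fun k => hb.comp (by fun_prop)
  have ha1 : ∀ k x, |a k x| ≤ 1 := fun k x => by
    rw [abs_of_nonneg (Real.smoothTransition.nonneg _)]
    exact Real.smoothTransition.le_one _
  have hc1 : ∀ k x, |c k x| ≤ 1 := fun k x => by
    rw [abs_of_nonneg b.nonneg]
    exact b.le_one
  have hcsupp : ∀ k, HasCompactSupport (c k) := fun k =>
    b.hasCompactSupport.comp_smul (inv_ne_zero (hK0 k).ne')
  refine ⟨fun k x => a k x * c k x, 2 * M₁ + M₂, by positivity, fun k => (ha k).mul (hc k),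
    fun k => (hcsupp k).mul_left, fun k => ?_, fun k x => ?_, fun k x hx => ?_, fun x hx => ?_⟩
  · have h1 : tsupport (fun x => a k x * c k x) ⊆ {x | 1 ≤ K k * x j} := by
      refine closure_minimal (fun x hx => ?_) (isClosed_le (by fun_prop) (by fun_prop))
      by_contra hcon
      rw [mem_ofPred_eq, not_le] at hcon
      refine hx ?_
      simp only [a]
      rw [Real.smoothTransition.zero_of_nonpos (by linarith), zero_mul]
    intro x hx
    have := h1 hx
    rw [mem_ofPred_eq] at this ⊢
    exact pos_of_mul_pos_right (zero_lt_one.trans_le this) (hK0 k).le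
  · rw [abs_mul]
    exact mul_le_one₀ (ha1 k x) (abs_nonneg _) (hc1 k x)
  · have hda : HasFDerivAt (a k) ((deriv Real.smoothTransition (K k * x j - 1)) •
        (K k • (EuclideanSpace.proj j : EuclideanSpace ℝ (Fin m) →L[ℝ] ℝ))) x := by
      have h1 : HasFDerivAt (fun y : EuclideanSpace ℝ (Fin m) => K k * y j - 1)
          (K k • (EuclideanSpace.proj j : EuclideanSpace ℝ (Fin m) →L[ℝ] ℝ)) x :=
        (((EuclideanSpace.proj j : EuclideanSpace ℝ (Fin m) →L[ℝ] ℝ).hasFDerivAt).const_mul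
          (K k)).sub_const 1
      exact ((hst.differentiable (by simp)) _).hasDerivAt.comp_hasFDerivAt x h1
    have hdc : HasFDerivAt (c k) ((fderiv ℝ b ((K k)⁻¹ • x)).comp
        ((K k)⁻¹ • ContinuousLinearMap.id ℝ (EuclideanSpace ℝ (Fin m)))) x := by
      have h1 : HasFDerivAt (fun y : EuclideanSpace ℝ (Fin m) => (K k)⁻¹ • y)
          ((K k)⁻¹ • ContinuousLinearMap.id ℝ (EuclideanSpace ℝ (Fin m))) x :=
        ((K k)⁻¹ • ContinuousLinearMap.id ℝ (EuclideanSpace ℝ (Fin m))).hasFDerivAt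
      exact ((hb.differentiable (by simp)) _).hasFDerivAt.comp x h1
    have hpn : ‖(EuclideanSpace.proj j : EuclideanSpace ℝ (Fin m) →L[ℝ] ℝ)‖ ≤ 1 :=
      ContinuousLinearMap.opNorm_le_bound _ zero_le_one fun y => by
        simpa using PiLp.norm_apply_le y j
    -- The derivative of the boundary cutoff lives where `K k * x j ≤ 2`.
    have hna : |deriv Real.smoothTransition (K k * x j - 1)| * K k ≤ 2 * M₁ / x j := by
      rcases le_or_gt (K k * x j) 2 with h2 | h2
      · have : K k ≤ 2 / x j := by rwa [le_div_iff₀ hx]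
        calc _ ≤ M₁ * (2 / x j) := by gcongr; exact hM₁ _
          _ = _ := by ring
      · have : Real.smoothTransition =ᶠ[𝓝 (K k * x j - 1)] fun _ => 1 := by
          filter_upwards [Ioi_mem_nhds (show 1 < K k * x j - 1 by linarith)] with s hs
          exact Real.smoothTransition.one_of_one_le (le_of_lt hs)
        rw [this.deriv_eq]
        simp only [deriv_const, abs_zero, zero_mul]
        positivity
    change ‖fderiv ℝ (a k * c k) x‖ ≤ _
    rw [(hda.mul hdc).fderiv]
    have e1 : ‖a k x • (fderiv ℝ b ((K k)⁻¹ • x)).comp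
        ((K k)⁻¹ • ContinuousLinearMap.id ℝ (EuclideanSpace ℝ (Fin m)))‖ ≤ M₂ := by
      rw [norm_smul, ContinuousLinearMap.comp_smul, ContinuousLinearMap.comp_id, norm_smul,
        Real.norm_eq_abs, Real.norm_eq_abs, abs_of_pos (inv_pos.2 (hK0 k))]
      calc _ ≤ 1 * (1 * M₂) := by
            gcongr
            · exact ha1 k x
            · exact inv_le_one_of_one_le₀ (hK k)
            · exact hM₂ _
        _ = M₂ := by ring
    have e2 : ‖c k x • (deriv Real.smoothTransition (K k * x j - 1)) •
        (K k • (EuclideanSpace.proj j : EuclideanSpace ℝ (Fin m) →L[ℝ] ℝ))‖ ≤ 2 * M₁ / x j := by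
      rw [norm_smul, norm_smul, norm_smul, Real.norm_eq_abs, Real.norm_eq_abs, Real.norm_eq_abs,
        abs_of_pos (hK0 k), ← mul_assoc (|deriv _ _|)]
      calc _ ≤ 1 * ((2 * M₁ / x j) * 1) := by
            gcongr
            exact hc1 k x
        _ = _ := by ring
    calc _ ≤ M₂ + 2 * M₁ / x j := (norm_add_le _ _).trans (add_le_add e1 e2)
      _ ≤ _ := by
        have : 0 ≤ M₂ / x j := by positivity
        have h3 : (2 * M₁ + M₂) * (1 + 1 / x j)
          = 2 * M₁ + M₂ + 2 * M₁ / x j + M₂ / x j := by ring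
        rw [h3]; linarith
  · have hKt : Tendsto K atTop atTop :=
      tendsto_atTop_add_const_right _ _ tendsto_natCast_atTop_atTop
    filter_upwards [hKt.eventually_gt_atTop (2 / x j), hKt.eventually_gt_atTop ‖x‖] with k h1 h2
    have h1' : 2 < K k * x j := by rwa [div_lt_iff₀ hx] at h1
    have o1 : ∀ᶠ y : EuclideanSpace ℝ (Fin m) in 𝓝 x, 2 < K k * y j :=
      (isOpen_lt (by fun_prop) (by fun_prop)).mem_nhds h1'
    have o2 : ∀ᶠ y : EuclideanSpace ℝ (Fin m) in 𝓝 x, ‖y‖ < K k :=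
      (isOpen_lt (by fun_prop) (by fun_prop)).mem_nhds h2
    filter_upwards [o1, o2] with y hy1 hy2
    have q1 : a k y = 1 := Real.smoothTransition.one_of_one_le (by linarith)
    have q2 : c k y = 1 := b.one_of_mem_closedBall (by
      rw [mem_closedBall_zero_iff, norm_smul, Real.norm_eq_abs, abs_of_pos (inv_pos.2 (hK0 k)),
        inv_mul_le_iff₀ (hK0 k)]
      simpa [b] using hy2.le)
    simp only [q1, q2, mul_one]

/-! ### Green's identity on the half-space -/

/-- A function vanishing on the boundary is at most `x_j` times its gradient on the vertical
segment below `x`; hence `|u| / x_j` decays at least as fast as the bound on `|u|`. -/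
lemma boundary_decay {m : ℕ} (j : Fin m) {C α β : ℝ} (hC : 0 ≤ C) (hβ : 0 ≤ β) (hαβ : α ≤ β)
    {u : EuclideanSpace ℝ (Fin m) → ℝ}
    (hucont : ContinuousOn u {x | 0 ≤ x j})
    (hd : DifferentiableOn ℝ u {x | 0 < x j})
    (hbdry : ∀ x, x j = 0 → u x = 0)
    (hudecay : ∀ x, 0 ≤ x j → |u x| ≤ C * (1 + ‖x‖) ^ (-α))
    (hugrad : ∀ x, 0 < x j → ‖fderiv ℝ u x‖ ≤ C * (1 + ‖x‖) ^ (-β))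
    {x : EuclideanSpace ℝ (Fin m)} (hx : 0 < x j) :
    (1 + 1 / x j) * |u x| ≤ 2 ^ (1 + β) * C * (1 + ‖x‖) ^ (-α) := by
  have hw : 1 ≤ 1 + ‖x‖ := by simp
  have h2β : (1 : ℝ) ≤ 2 ^ β := Real.one_le_rpow (by norm_num) hβ
  rw [Real.rpow_add (by norm_num), Real.rpow_one]
  rcases le_or_gt 1 (x j) with h1 | h1
  · have : 1 / x j ≤ 1 := by rw [div_le_one hx]; exact h1
    calc (1 + 1 / x j) * |u x| ≤ 2 * (C * (1 + ‖x‖) ^ (-α)) := by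
          gcongr
          · linarith
          · exact hudecay x hx.le
      _ ≤ 2 ^ β * (2 * (C * (1 + ‖x‖) ^ (-α))) := le_mul_of_one_le_left (by positivity) h2β
      _ = _ := by ring
  -- For `x j < 1`, the mean value theorem along the vertical segment from the boundary to `x`.
  · let γ : ℝ → EuclideanSpace ℝ (Fin m) := fun t => x + (t - x j) • EuclideanSpace.single j 1
    have hγj : ∀ t, γ t j = t := fun t => by simp [γ]
    have hγx : γ (x j) = x := by simp [γ]
    have hγd : ∀ t, HasDerivAt γ (EuclideanSpace.single j 1) t := fun t => by
      have := (((hasDerivAt_id t).sub_const (x j)).smul_const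
        (EuclideanSpace.single j (1 : ℝ))).const_add x
      simpa [γ] using this
    have hopen : IsOpen {x : EuclideanSpace ℝ (Fin m) | 0 < x j} :=
      isOpen_lt (by fun_prop) (by fun_prop)
    have hder : ∀ t, 0 < t → HasDerivAt (fun t => u (γ t))
        (fderiv ℝ u (γ t) (EuclideanSpace.single j 1)) t := fun t ht =>
      ((hd.differentiableAt (hopen.mem_nhds (by simpa [hγj] using ht))).hasFDerivAt).comp_hasDerivAt
        t (hγd t)
    obtain ⟨t, ht, hslope⟩ := exists_hasDerivAt_eq_slope (fun t => u (γ t))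
      (fun t => fderiv ℝ u (γ t) (EuclideanSpace.single j 1)) hx
      (hucont.comp (continuous_iff_continuousAt.2 fun t => (hγd t).continuousAt).continuousOn
        fun t ht => by simpa [hγj] using ht.1) fun t ht => hder t ht.1
    rw [hγx, hbdry (γ 0) (hγj 0), sub_zero, sub_zero, eq_div_iff hx.ne'] at hslope
    have hdist : ‖x‖ ≤ ‖γ t‖ + 1 := by
      have : x = γ t - (t - x j) • EuclideanSpace.single j 1 := by simp [γ]
      calc ‖x‖ ≤ ‖γ t‖ + ‖(t - x j) • (EuclideanSpace.single j 1 : EuclideanSpace ℝ (Fin m))‖ := by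
            conv_lhs => rw [this]
            exact norm_sub_le _ _
        _ ≤ _ := by
          gcongr
          rw [norm_smul, Real.norm_eq_abs, PiLp.norm_single, norm_one, mul_one, abs_le]
          constructor <;> linarith [ht.1, ht.2]
    have hgr : |fderiv ℝ u (γ t) (EuclideanSpace.single j 1)|
        ≤ C * (2 ^ β * (1 + ‖x‖) ^ (-α)) := by
      calc _ ≤ ‖fderiv ℝ u (γ t)‖ * ‖(EuclideanSpace.single j 1 : EuclideanSpace ℝ (Fin m))‖ :=
            (fderiv ℝ u (γ t)).le_opNorm _
        _ = ‖fderiv ℝ u (γ t)‖ := by simp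
        _ ≤ C * (1 + ‖γ t‖) ^ (-β) := hugrad _ (by rw [hγj]; exact ht.1)
        _ ≤ C * ((1 + ‖x‖) / 2) ^ (-β) := by
          gcongr C * ?_
          exact Real.rpow_le_rpow_of_nonpos (by positivity) (by linarith [norm_nonneg (γ t)])
            (by linarith)
        _ = C * (2 ^ β * (1 + ‖x‖) ^ (-β)) := by
          rw [Real.div_rpow (by positivity) (by norm_num), Real.rpow_neg (x := 2) (by norm_num)]
          field_simp
        _ ≤ _ := by gcongr
    have h3 : 1 + 1 / x j ≤ 2 / x j := by
      rw [le_div_iff₀ hx, add_mul, div_mul_cancel₀ _ hx.ne']; linarith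
    calc (1 + 1 / x j) * |u x| ≤ 2 / x j * |u x| := by gcongr
      _ = 2 * |fderiv ℝ u (γ t) (EuclideanSpace.single j 1)| := by
        rw [← hslope, abs_mul, abs_of_pos hx]; field_simp
      _ ≤ 2 * (C * (2 ^ β * (1 + ‖x‖) ^ (-α))) := by gcongr
      _ = _ := by ring

/-- The class of functions for which Green's identity is proved on the half-space `x_j > 0`: `C²`
inside, continuous up to the boundary, zero on the boundary, with decay of order `α` for the
function and of order `β` for its gradient and its Laplacian. -/
structure HalfSpaceDecay {m : ℕ} (j : Fin m) (C α β : ℝ)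
    (u : EuclideanSpace ℝ (Fin m) → ℝ) : Prop where
  cont : ContinuousOn u {x | 0 ≤ x j}
  contDiff : ContDiffOn ℝ 2 u {x | 0 < x j}
  bdry : ∀ x, x j = 0 → u x = 0
  decay : ∀ x, 0 ≤ x j → |u x| ≤ C * (1 + ‖x‖) ^ (-α)
  grad : ∀ x, 0 < x j → ‖fderiv ℝ u x‖ ≤ C * (1 + ‖x‖) ^ (-β)
  lap : ∀ x, 0 < x j → |laplacian u x| ≤ C * (1 + ‖x‖) ^ (-β)

lemma isOpen_halfSpace {m : ℕ} (j : Fin m) : IsOpen {x : EuclideanSpace ℝ (Fin m) | 0 < x j} :=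
  isOpen_lt (by fun_prop) (by fun_prop)

lemma contDiffOn_partial {m : ℕ} {j : Fin m} {u : EuclideanSpace ℝ (Fin m) → ℝ}
    (hu : ContDiffOn ℝ 2 u {x | 0 < x j}) (i : Fin m) :
    ContDiffOn ℝ 1 (fun y => fderiv ℝ u y (EuclideanSpace.single i 1)) {x | 0 < x j} :=
  (hu.fderiv_of_isOpen (isOpen_halfSpace j) (by norm_num)).clm_apply contDiffOn_const

lemma continuousOn_laplacian {m : ℕ} {j : Fin m} {u : EuclideanSpace ℝ (Fin m) → ℝ}
    (hu : ContDiffOn ℝ 2 u {x | 0 < x j}) : ContinuousOn (laplacian u) {x | 0 < x j} :=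
  continuousOn_finsetSum _ fun i _ =>
    (((contDiffOn_partial hu i).continuousOn_fderiv_of_isOpen (isOpen_halfSpace j)
      le_rfl)).clm_apply continuousOn_const

/-- Integration by parts against the constant function `1`. -/
lemma integral_divergence_eq_zero {m : ℕ} {g : EuclideanSpace ℝ (Fin m) → ℝ}
    (hg : ContDiff ℝ 1 g) (hs : HasCompactSupport g) (v : EuclideanSpace ℝ (Fin m)) :
    ∫ x, fderiv ℝ g x v = 0 := by
  have hi : Integrable (fun x => fderiv ℝ g x v) :=
    ((hg.continuous_fderiv (by simp)).clm_apply continuous_const).integrable_of_hasCompactSupport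
      (hs.fderiv_apply (𝕜 := ℝ) v)
  have := integral_bilinear_hasLineDerivAt_right_eq_neg_left_of_integrable
    (μ := (volume : Measure (EuclideanSpace ℝ (Fin m))))
    (f := fun _ => (1 : ℝ)) (f' := fun _ => 0) (g := g) (g' := fun x => fderiv ℝ g x v) (v := v)
    (B := ContinuousLinearMap.mul ℝ ℝ) (by simp) (by simpa using hi)
    (by simpa using hg.continuous.integrable_of_hasCompactSupport hs)
    (fun x _ => by simpa using (hasFDerivAt_const (1 : ℝ) x).hasLineDerivAt v)
    (fun x _ => ((hg.differentiable (by simp)) x).hasFDerivAt.hasLineDerivAt v)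
  simpa using this

/-- No assumption is made on `F` outside the half-space, where the product vanishes. -/
lemma contDiff_cutoff_mul {m : ℕ} {j : Fin m} {ψ F : EuclideanSpace ℝ (Fin m) → ℝ}
    (hψ : ContDiff ℝ 1 ψ) (hs : tsupport ψ ⊆ {x | 0 < x j})
    (hF : ContDiffOn ℝ 1 F {x | 0 < x j}) : ContDiff ℝ 1 (fun x => ψ x * F x) := by
  refine contDiff_iff_contDiffAt.2 fun x => ?_
  by_cases hx : x ∈ tsupport ψ
  · exact hψ.contDiffAt.mul (hF.contDiffAt ((isOpen_halfSpace j).mem_nhds (hs hx)))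
  · refine (contDiffAt_const (c := (0 : ℝ))).congr_of_eventuallyEq ?_
    filter_upwards [notMem_tsupport_iff_eventuallyEq.1 hx] with y hy
    simp [hy]

lemma HalfSpaceDecay.integrable_mul {m : ℕ} {j : Fin m} {C α β : ℝ} (hC : 0 ≤ C)
    (hm : (m : ℝ) < α + β) {u v : EuclideanSpace ℝ (Fin m) → ℝ}
    (hu : HalfSpaceDecay j C α β u) (hv : HalfSpaceDecay j C α β v) :
    IntegrableOn (fun x => u x * laplacian v x) {x | 0 < x j} := by
  have hint : Integrable (fun x : EuclideanSpace ℝ (Fin m) => (1 + ‖x‖) ^ (-(α + β))) :=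
    integrable_one_add_norm (by simpa using hm)
  refine ((hint.const_mul (C * C)).integrableOn).mono'
    ((hu.contDiff.continuousOn.mul (continuousOn_laplacian hv.contDiff)).aestronglyMeasurable
      (isOpen_halfSpace j).measurableSet) ?_
  refine (ae_restrict_iff' (isOpen_halfSpace j).measurableSet).2 (.of_forall fun x hx => ?_)
  have hw : 0 < 1 + ‖x‖ := by positivity
  rw [norm_mul, Real.norm_eq_abs, Real.norm_eq_abs, neg_add, Real.rpow_add hw]
  calc _ ≤ (C * (1 + ‖x‖) ^ (-α)) * (C * (1 + ‖x‖) ^ (-β)) := by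
        gcongr
        · exact hu.decay x (le_of_lt hx)
        · exact hv.lap x hx
    _ = _ := by ring

/-- Green's identity without boundary term. The second derivatives of `u` and `v` are controlled only
through the Laplacian, so the divergence theorem is applied to compactly supported fields. -/
lemma green_halfSpace {m : ℕ} {j : Fin m} {C α β : ℝ} (hC : 0 ≤ C) (hβ : 0 ≤ β) (hαβ : α ≤ β)
    (hm : (m : ℝ) < α + β) {u v : EuclideanSpace ℝ (Fin m) → ℝ}
    (hu : HalfSpaceDecay j C α β u) (hv : HalfSpaceDecay j C α β v) :
    ∫ x in {x | 0 < x j}, u x * laplacian v x = ∫ x in {x | 0 < x j}, v x * laplacian u x := by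
  rw [← sub_eq_zero, ← integral_sub (hu.integrable_mul hC hm hv) (hv.integrable_mul hC hm hu)]
  have hH := isOpen_halfSpace j
  obtain ⟨ψ, M, hM, hψ, hψc, hψs, hψ1, hψd, hψe⟩ := exists_cutoff j
  let e : Fin m → EuclideanSpace ℝ (Fin m) := fun i => EuclideanSpace.single i 1
  let F : Fin m → EuclideanSpace ℝ (Fin m) → ℝ := fun i y =>
    u y * fderiv ℝ v y (e i) - v y * fderiv ℝ u y (e i)
  have hF : ∀ i, ContDiffOn ℝ 1 (F i) {x | 0 < x j} := fun i =>
    ((hu.contDiff.of_le (by norm_num)).mul (contDiffOn_partial hv.contDiff i)).sub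
      ((hv.contDiff.of_le (by norm_num)).mul (contDiffOn_partial hu.contDiff i))
  have hG : ∀ k i, ContDiff ℝ 1 (fun x => ψ k x * F i x) := fun k i =>
    contDiff_cutoff_mul (hψ k) (hψs k) (hF i)
  have hGs : ∀ k i, HasCompactSupport (fun x => ψ k x * F i x) := fun k i => (hψc k).mul_right
  let J : ℕ → EuclideanSpace ℝ (Fin m) → ℝ := fun k x =>
    ∑ i, fderiv ℝ (fun y => ψ k y * F i y) x (e i)
  have hJc : ∀ k, Continuous (J k) := fun k => continuous_finsetSum _ fun i _ =>
    ((hG k i).continuous_fderiv (by simp)).clm_apply continuous_const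
  have hdF : ∀ i, ∀ x, 0 < x j → fderiv ℝ (F i) x (e i)
      = u x * fderiv ℝ (fun y => fderiv ℝ v y (e i)) x (e i)
        - v x * fderiv ℝ (fun y => fderiv ℝ u y (e i)) x (e i) := by
    intro i x hx
    have hn := hH.mem_nhds hx
    have d1 := ((hu.contDiff.contDiffAt hn).differentiableAt (by norm_num)).hasFDerivAt
    have d2 := ((hv.contDiff.contDiffAt hn).differentiableAt (by norm_num)).hasFDerivAt
    have d3 := (((contDiffOn_partial hu.contDiff i).contDiffAt hn).differentiableAt
      (by norm_num)).hasFDerivAt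
    have d4 := (((contDiffOn_partial hv.contDiff i).contDiffAt hn).differentiableAt
      (by norm_num)).hasFDerivAt
    have := (d1.mul d4).sub (d2.mul d3)
    have h5 : fderiv ℝ (F i) x = _ := this.fderiv
    rw [h5]
    simp only [e, sub_apply, add_apply,
      smul_apply, smul_eq_mul]
    ring
  have hJ : ∀ k x, 0 < x j → J k x = ψ k x * (u x * laplacian v x - v x * laplacian u x)
      + ∑ i, fderiv ℝ (ψ k) x (e i) * F i x := by
    intro k x hx
    have : ∀ i, fderiv ℝ (fun y => ψ k y * F i y) x (e i)
        = ψ k x * fderiv ℝ (F i) x (e i) + fderiv ℝ (ψ k) x (e i) * F i x := by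
      intro i
      have d1 := ((hψ k).differentiable (by simp) x).hasFDerivAt
      have d2 := (((hF i).contDiffAt (hH.mem_nhds hx)).differentiableAt (by simp)).hasFDerivAt
      have h5 : fderiv ℝ (fun y => ψ k y * F i y) x = _ := (d1.mul d2).fderiv
      rw [h5]
      simp only [add_apply, smul_apply, smul_eq_mul]
      ring
    simp only [J, this, Finset.sum_add_distrib, ← Finset.mul_sum]
    congr 2
    simp only [hdF _ x hx, laplacian, Finset.sum_sub_distrib, ← Finset.mul_sum]
    rfl
  -- Off the half-space `J k` vanishes, so its integral is that of a compactly supported divergence.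
  have hJ0 : ∀ k, ∫ x in {x | 0 < x j}, J k x = 0 := by
    intro k
    rw [setIntegral_eq_integral_of_forall_compl_eq_zero]
    · rw [integral_finsetSum]
      · exact Finset.sum_eq_zero fun i _ => integral_divergence_eq_zero (hG k i) (hGs k i) _
      · exact fun i _ => (((hG k i).continuous_fderiv
          (by simp)).clm_apply continuous_const).integrable_of_hasCompactSupport
            ((hGs k i).fderiv_apply (𝕜 := ℝ) _)
    · intro x hx
      refine Finset.sum_eq_zero fun i _ => ?_
      rw [fderiv_of_notMem_tsupport ℝ (fun hmem => hx (hψs k (tsupport_mul_subset_left hmem)))]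
      rfl
  have hint : Integrable (fun x : EuclideanSpace ℝ (Fin m) => (1 + ‖x‖) ^ (-(α + β))) :=
    integrable_one_add_norm (by simpa using hm)
  let D : ℝ := 2 ^ (1 + β) * C
  have hD : 0 ≤ D := by positivity
  have hlim := tendsto_integral_of_dominated_convergence
    (μ := volume.restrict {x : EuclideanSpace ℝ (Fin m) | 0 < x j}) (F := J)
    (f := fun x => u x * laplacian v x - v x * laplacian u x)
    (fun x => (2 * (C * C) + m * (M * (2 * (D * C)))) * (1 + ‖x‖) ^ (-(α + β)))
    (fun k => (hJc k).aestronglyMeasurable) (hint.const_mul _).integrableOn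
    (fun k => (ae_restrict_iff' hH.measurableSet).2 (.of_forall fun x hx => ?_))
    ((ae_restrict_iff' hH.measurableSet).2 (.of_forall fun x hx => ?_))
  · simp only [hJ0] at hlim
    exact tendsto_nhds_unique hlim tendsto_const_nhds
  · have hx' : 0 < x j := hx
    have hw : 0 < 1 + ‖x‖ := by positivity
    have b1 : |u x * laplacian v x - v x * laplacian u x|
        ≤ 2 * (C * C) * ((1 + ‖x‖) ^ (-α) * (1 + ‖x‖) ^ (-β)) := by
      calc _ ≤ |u x| * |laplacian v x| + |v x| * |laplacian u x| := by
            rw [← abs_mul, ← abs_mul]; exact abs_sub _ _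
        _ ≤ (C * (1 + ‖x‖) ^ (-α)) * (C * (1 + ‖x‖) ^ (-β))
            + (C * (1 + ‖x‖) ^ (-α)) * (C * (1 + ‖x‖) ^ (-β)) := by
          gcongr
          · exact hu.decay x hx'.le
          · exact hv.lap x hx
          · exact hv.decay x hx'.le
          · exact hu.lap x hx
        _ = _ := by ring
    have he : ∀ i (f : EuclideanSpace ℝ (Fin m) → ℝ), |fderiv ℝ f x (e i)| ≤ ‖fderiv ℝ f x‖ := by
      intro i f
      simpa [e] using (fderiv ℝ f x).le_opNorm (e i)
    have bu := boundary_decay j hC hβ hαβ hu.cont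
      (hu.contDiff.differentiableOn (by norm_num)) hu.bdry hu.decay hu.grad hx'
    have bv := boundary_decay j hC hβ hαβ hv.cont
      (hv.contDiff.differentiableOn (by norm_num)) hv.bdry hv.decay hv.grad hx'
    have b2 : ∀ i, |fderiv ℝ (ψ k) x (e i) * F i x|
        ≤ M * (2 * (D * C)) * ((1 + ‖x‖) ^ (-α) * (1 + ‖x‖) ^ (-β)) := by
      intro i
      have hFb : |F i x| ≤ |u x| * (C * (1 + ‖x‖) ^ (-β)) + |v x| * (C * (1 + ‖x‖) ^ (-β)) := by
        calc _ ≤ |u x| * |fderiv ℝ v x (e i)| + |v x| * |fderiv ℝ u x (e i)| := by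
              rw [← abs_mul, ← abs_mul]; exact abs_sub _ _
          _ ≤ _ := by
            gcongr
            · exact (he i v).trans (hv.grad x hx)
            · exact (he i u).trans (hu.grad x hx)
      rw [abs_mul]
      calc _ ≤ (M * (1 + 1 / x j))
            * (|u x| * (C * (1 + ‖x‖) ^ (-β)) + |v x| * (C * (1 + ‖x‖) ^ (-β))) := by
            gcongr
            exact (he i _).trans (hψd k x hx)
        _ = M * (((1 + 1 / x j) * |u x| + (1 + 1 / x j) * |v x|) * (C * (1 + ‖x‖) ^ (-β))) := by
            ring
        _ ≤ M * ((D * (1 + ‖x‖) ^ (-α) + D * (1 + ‖x‖) ^ (-α)) * (C * (1 + ‖x‖) ^ (-β))) := by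
            gcongr
        _ = _ := by ring
    rw [Real.norm_eq_abs, hJ k x hx, neg_add, Real.rpow_add hw]
    calc _ ≤ |ψ k x| * |u x * laplacian v x - v x * laplacian u x|
          + ∑ i, |fderiv ℝ (ψ k) x (e i) * F i x| := by
          rw [← abs_mul]
          exact (abs_add_le _ _).trans (by gcongr; exact Finset.abs_sum_le_sum_abs _ _)
      _ ≤ 1 * (2 * (C * C) * ((1 + ‖x‖) ^ (-α) * (1 + ‖x‖) ^ (-β)))
          + ∑ _i : Fin m, M * (2 * (D * C)) * ((1 + ‖x‖) ^ (-α) * (1 + ‖x‖) ^ (-β)) := by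
          gcongr with i
          · exact hψ1 k x
          · exact b2 i
      _ = _ := by
        rw [Finset.sum_const, Finset.card_univ, Fintype.card_fin, nsmul_eq_mul]
        ring
  -- At a fixed `x`, the cutoff is `1` near `x` for large `k`, so the sequence is eventually constant.
  · refine tendsto_const_nhds.congr' ?_
    filter_upwards [hψe x hx] with k hk
    rw [hJ k x hx, hk.fderiv_eq, hk.eq_of_nhds]
    simp

/-! ### Cylindrical coordinates -/

/-- The measure `r ^ q dr` on `(0, ∞)`, as a measure on `ℝ`. -/
noncomputable def radialDensity (q : ℕ) : Measure ℝ :=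
  (volume.restrict (Ioi (0 : ℝ))).withDensity fun r => ENNReal.ofReal (r ^ q)

/-- The cylindrical coordinates `(|x'|, x_last)` of a point of `ℝ^{k+1}`. -/
noncomputable def cyl {k : ℕ} (x : EuclideanSpace ℝ (Fin (k + 1))) : ℝ × ℝ :=
  (Real.sqrt (∑ j : Fin k, (x j.castSucc) ^ 2), x (Fin.last k))

instance (q : ℕ) : SFinite (radialDensity q) := by
  unfold radialDensity; infer_instance

/-- Polar coordinates for the density `(L x) ^ p` with `L` linear: homogeneity of degree `p` gives
a spherical constant and raises the radial exponent by `p`. -/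
lemma map_norm_withDensity {E : Type*} [NormedAddCommGroup E] [NormedSpace ℝ E] [MeasurableSpace E]
    [BorelSpace E] [FiniteDimensional ℝ E] [Nontrivial E] (μ : Measure E) [μ.IsAddHaarMeasure]
    (L : StrongDual ℝ E) (p : ℕ) :
    Measure.map norm (μ.withDensity fun x => ENNReal.ofReal (L x ^ p))
      = (∫⁻ θ : Metric.sphere (0 : E) 1, ENNReal.ofReal (L θ ^ p) ∂μ.toSphere)
          • radialDensity (Module.finrank ℝ E - 1 + p) := by
  have hw : Measurable fun x : E => ENNReal.ofReal (L x ^ p) := by fun_prop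
  refine Measure.ext_of_lintegral _ fun f hf => ?_
  rw [lintegral_map hf measurable_norm, lintegral_withDensity_eq_lintegral_mul _ hw (by fun_prop),
    lintegral_smul_measure, radialDensity,
    lintegral_withDensity_eq_lintegral_mul _ (by fun_prop) hf]
  simp only [Pi.mul_apply]
  have h0 : μ.restrict {0}ᶜ = μ := restrict_compl_singleton 0
  rw [show ∀ g : E → ENNReal, ∫⁻ x, g x ∂μ = ∫⁻ x in {0}ᶜ, g x ∂μ from fun g => by rw [h0],
    ← lintegral_subtype_comap (measurableSet_singleton _).compl]
  have key : ∀ x : ({0}ᶜ : Set E), ENNReal.ofReal (L x ^ p) * f ‖x.1‖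
      = (fun z : Metric.sphere (0 : E) 1 × Ioi (0 : ℝ) =>
          ENNReal.ofReal (L z.1 ^ p) * (ENNReal.ofReal (z.2.1 ^ p) * f z.2.1))
          (homeomorphUnitSphereProd E x) := by
    intro x
    have hx : 0 < ‖x.1‖ := norm_pos_iff.2 x.2
    simp only [homeomorphUnitSphereProd_apply_snd_coe, homeomorphUnitSphereProd_apply_fst_coe]
    rw [← mul_assoc, mul_comm (ENNReal.ofReal _) (ENNReal.ofReal (‖x.1‖ ^ p)),
      ← ENNReal.ofReal_mul (by positivity), ← mul_pow, map_smul, smul_eq_mul,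
      mul_inv_cancel_left₀ hx.ne']
  have hm1 : Measurable fun z : Metric.sphere (0 : E) 1 => ENNReal.ofReal (L z ^ p) := by fun_prop
  have hm2 : Measurable fun z : Ioi (0 : ℝ) => ENNReal.ofReal (z.1 ^ p) * f z.1 := by fun_prop
  have hm3 : Measurable fun z : Metric.sphere (0 : E) 1 × Ioi (0 : ℝ) =>
      ENNReal.ofReal (L z.1 ^ p) * (ENNReal.ofReal (z.2.1 ^ p) * f z.2.1) :=
    (hm1.comp measurable_fst).mul (hm2.comp measurable_snd)
  rw [lintegral_congr key, μ.measurePreserving_homeomorphUnitSphereProd.lintegral_comp hm3,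
    lintegral_prod_mul hm1.aemeasurable hm2.aemeasurable, smul_eq_mul]
  congr 1
  rw [Measure.volumeIoiPow, lintegral_withDensity_eq_lintegral_mul _ (by fun_prop) hm2,
    ← lintegral_subtype_comap measurableSet_Ioi]
  refine lintegral_congr fun r => ?_
  have hr : (0 : ℝ) < r.1 := r.2
  simp only [Pi.mul_apply]
  rw [← mul_assoc, ← ENNReal.ofReal_mul (by positivity), pow_add]

lemma measurable_cyl {k : ℕ} : Measurable (cyl (k := k)) := by
  unfold cyl; fun_prop

/-- The half-space of `ℝ^{k+2}` with density `x_i ^ p`, pushed forward to cylindrical coordinates,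
depends only on `k + p` up to a constant. -/
lemma map_cyl (k p : ℕ) (i : Fin (k + 1)) :
    Measure.map cyl (((volume : Measure (EuclideanSpace ℝ (Fin (k + 2)))).restrict
        {x | 0 < x (Fin.last (k + 1))}).withDensity fun x => ENNReal.ofReal (x i.castSucc ^ p))
      = (∫⁻ θ : Metric.sphere (0 : EuclideanSpace ℝ (Fin (k + 1))) 1,
            ENNReal.ofReal (θ.1 i ^ p) ∂(volume : Measure (EuclideanSpace ℝ (Fin (k + 1)))).toSphere)
          • (radialDensity (k + p)).prod (volume.restrict (Ioi 0)) := by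
  set e : EuclideanSpace ℝ (Fin (k + 2)) → EuclideanSpace ℝ (Fin (k + 1)) × ℝ :=
    fun x => (WithLp.toLp 2 fun j => x j.castSucc, x (Fin.last _)) with he
  have hem : MeasurePreserving e volume (volume.prod volume) := by
    have h1 := PiLp.volume_preserving_ofLp (Fin (k + 2))
    have h2 := volume_preserving_piFinSuccAbove (fun _ : Fin (k + 2) => ℝ) (Fin.last _)
    have h3 := Measure.measurePreserving_swap (μ := (volume : Measure ℝ))
      (ν := (volume : Measure (Fin (k + 1) → ℝ)))
    have h4 := (PiLp.volume_preserving_toLp (Fin (k + 1))).prod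
      (MeasurePreserving.id (volume : Measure ℝ))
    have := h4.comp (h3.comp (h2.comp h1))
    have hfun : e = Prod.map (WithLp.toLp 2) id ∘ Prod.swap ∘
        MeasurableEquiv.piFinSuccAbove (fun _ => ℝ) (Fin.last (k + 1)) ∘ WithLp.ofLp := by
      funext x
      simp [e, Fin.init_def]
    rw [hfun]
    exact this
  have hc : (cyl : EuclideanSpace ℝ (Fin (k + 2)) → ℝ × ℝ) = Prod.map norm id ∘ e := by
    funext x
    simp [cyl, e, EuclideanSpace.norm_eq]
  have hw : Measurable fun x : EuclideanSpace ℝ (Fin (k + 1)) => ENNReal.ofReal (x i ^ p) := by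
    fun_prop
  have hmap : Measure.map e (((volume : Measure (EuclideanSpace ℝ (Fin (k + 2)))).restrict
        {x | 0 < x (Fin.last (k + 1))}).withDensity fun x => ENNReal.ofReal (x i.castSucc ^ p))
      = ((volume : Measure (EuclideanSpace ℝ (Fin (k + 1)))).withDensity
          fun x => ENNReal.ofReal (x i ^ p)).prod (volume.restrict (Ioi 0)) := by
    rw [prod_withDensity_left hw]
    have hr := hem.restrict_preimage (s := univ ×ˢ Ioi (0 : ℝ))
      (MeasurableSet.univ.prod measurableSet_Ioi)
    rw [← Measure.prod_restrict, Measure.restrict_univ] at hr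
    have hs : e ⁻¹' (univ ×ˢ Ioi (0 : ℝ)) = {x | 0 < x (Fin.last (k + 1))} := by
      ext x; simp [e]
    rw [hs] at hr
    refine Measure.ext_of_lintegral _ fun f hf => ?_
    rw [lintegral_map hf hem.measurable, lintegral_withDensity_eq_lintegral_mul _ (by fun_prop)
      (show Measurable fun a => f (e a) from hf.comp hem.measurable), lintegral_withDensity_eq_lintegral_mul _ (by fun_prop) hf,
      ← hr.lintegral_comp (by fun_prop)]
    rfl
  rw [hc, ← Measure.map_map (by fun_prop) hem.measurable, hmap,
    ← Measure.map_prod_map _ _ measurable_norm measurable_id, Measure.map_id,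
    ← Measure.prod_smul_left]
  have := map_norm_withDensity (volume : Measure (EuclideanSpace ℝ (Fin (k + 1))))
    (EuclideanSpace.proj i) p
  simp only [finrank_euclideanSpace, Fintype.card_fin, Nat.add_sub_cancel,
    PiLp.proj_apply] at this
  rw [this]

/-- Evenness of `p` makes the weight nonnegative, hence equal to its truncation by
`ENNReal.ofReal`. -/
lemma integral_cyl (k p : ℕ) (i : Fin (k + 1)) (hp : Even p) {G : ℝ → ℝ → ℝ}
    (hG : ContinuousOn (Function.uncurry G) (Ici 0 ×ˢ Ici 0)) :
    ∫ x in {x : EuclideanSpace ℝ (Fin (k + 2)) | 0 < x (Fin.last (k + 1))},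
        G (cyl x).1 (cyl x).2 * x i.castSucc ^ p
      = (∫⁻ θ : Metric.sphere (0 : EuclideanSpace ℝ (Fin (k + 1))) 1,
            ENNReal.ofReal (θ.1 i ^ p)
              ∂(volume : Measure (EuclideanSpace ℝ (Fin (k + 1)))).toSphere).toReal
          * ∫ z, Function.uncurry G z ∂(radialDensity (k + p)).prod (volume.restrict (Ioi 0)) := by
  have hac : (radialDensity (k + p)).prod (volume.restrict (Ioi 0)) ≪
      (volume : Measure (ℝ × ℝ)).restrict (Ioi 0 ×ˢ Ioi 0) := by
    rw [Measure.volume_eq_prod, ← Measure.prod_restrict]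
    exact (withDensity_absolutelyContinuous _ _).prod .rfl
  have hm : AEStronglyMeasurable (Function.uncurry G)
      ((radialDensity (k + p)).prod (volume.restrict (Ioi 0))) :=
    ((hG.mono (prod_mono Ioi_subset_Ici_self Ioi_subset_Ici_self)).aestronglyMeasurable
      (measurableSet_Ioi.prod measurableSet_Ioi)).mono_ac hac
  rw [← smul_eq_mul, ← integral_smul_measure, ← map_cyl k p i, integral_map
    measurable_cyl.aemeasurable (by rw [map_cyl]; exact hm.smul_measure _),
    integral_withDensity_eq_integral_toReal_smul (by fun_prop) (by simp)]
  refine integral_congr_ae (.of_forall fun x => ?_)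
  simp [ENNReal.toReal_ofReal (hp.pow_nonneg _), mul_comm, Function.uncurry]


/-! ### The symmetry -/

/-- The symmetry for `n = k + 2`, in terms of `cyl`. -/
lemma cyl_symmetry (k : ℕ) (C : ℝ) (φ : Fin 2 → ℝ → ℝ → ℝ)
    (u : Fin 2 → EuclideanSpace ℝ (Fin (k + 4 + 2)) → ℝ)
    (hφcont : ∀ i, ContinuousOn (Function.uncurry (φ i)) (Ici 0 ×ˢ Ici 0))
    (hφnonneg : ∀ i, ∀ r s : ℝ, 0 ≤ r → 0 ≤ s → 0 ≤ φ i r s)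
    (hφdecay : ∀ i, ∀ r s : ℝ, 0 ≤ r → 0 ≤ s →
      φ i r s ≤ C * (1 + r + s) ^ (-((k + 2 : ℕ) : ℝ) - 3))
    (hucont : ∀ i, ContinuousOn (u i) {x | 0 ≤ x (Fin.last (k + 5))})
    (huC2 : ∀ i, ContDiffOn ℝ 2 (u i) {x | 0 < x (Fin.last (k + 5))})
    (huradial : ∀ i, ∀ x y : EuclideanSpace ℝ (Fin (k + 4 + 2)),
      (∑ j : Fin (k + 5), (x j.castSucc) ^ 2) = (∑ j : Fin (k + 5), (y j.castSucc) ^ 2) →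
      x (Fin.last (k + 5)) = y (Fin.last (k + 5)) → u i x = u i y)
    (hpde : ∀ i, ∀ x, 0 < x (Fin.last (k + 5)) →
      -laplacian (u i) x = φ i (cyl x).1 (cyl x).2)
    (hbdry : ∀ i, ∀ x, x (Fin.last (k + 5)) = 0 → u i x = 0)
    (hudecay : ∀ i, ∀ x, 0 ≤ x (Fin.last (k + 5)) →
      |u i x| ≤ C * (1 + ‖x‖) ^ (-((k + 2 : ℕ) : ℝ) - 2))
    (hugrad : ∀ i, ∀ x, 0 < x (Fin.last (k + 5)) →
      ‖fderiv ℝ (u i) x‖ ≤ C * (1 + ‖x‖) ^ (-((k + 2 : ℕ) : ℝ) - 3)) :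
    ∫ x in {x : EuclideanSpace ℝ (Fin (k + 2)) | 0 < x (Fin.last (k + 1))},
        φ 0 (cyl x).1 (cyl x).2 * u 1 (EuclideanSpace.single 0 (cyl x).1
          + EuclideanSpace.single (Fin.last (k + 5)) (cyl x).2) * x (Fin.castSucc 0) ^ 4
      = ∫ x in {x : EuclideanSpace ℝ (Fin (k + 2)) | 0 < x (Fin.last (k + 1))},
        φ 1 (cyl x).1 (cyl x).2 * u 0 (EuclideanSpace.single 0 (cyl x).1
          + EuclideanSpace.single (Fin.last (k + 5)) (cyl x).2) * x (Fin.castSucc 0) ^ 4 := by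
  -- The bound on `u 0` at the origin forces `C` to be nonnegative.
  have hC : 0 ≤ C := by
    have h := (abs_nonneg _).trans (hudecay 0 0 (by simp))
    simpa using h
  have e2 : -((k + 2 : ℕ) : ℝ) - 2 = -(((k + 2 : ℕ) : ℝ) + 2) := by ring
  have e3 : -((k + 2 : ℕ) : ℝ) - 3 = -(((k + 2 : ℕ) : ℝ) + 3) := by ring
  rw [e3] at hφdecay hugrad
  rw [e2] at hudecay
  -- This transfers the decay of `φ i` in `r + s` to decay of the Laplacian in `‖x‖`.
  have hcyl : ∀ x : EuclideanSpace ℝ (Fin (k + 4 + 2)), 0 < x (Fin.last (k + 5)) →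
      ‖x‖ ≤ (cyl x).1 + (cyl x).2 := by
    intro x hx
    have h0 : 0 ≤ (cyl x).1 := Real.sqrt_nonneg _
    have h1 : 0 ≤ (cyl x).2 := hx.le
    rw [EuclideanSpace.norm_eq, Fin.sum_univ_castSucc]
    refine Real.sqrt_le_iff.2 ⟨by positivity, ?_⟩
    have h2 : (cyl x).1 ^ 2 = ∑ j : Fin (k + 5), (x j.castSucc) ^ 2 :=
      Real.sq_sqrt (Finset.sum_nonneg fun _ _ => sq_nonneg _)
    have h3 : (cyl x).2 = x (Fin.last (k + 5)) := rfl
    simp only [Real.norm_eq_abs, sq_abs]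
    rw [← h2, ← h3]
    nlinarith
  have hdec : ∀ i, HalfSpaceDecay (Fin.last (k + 5)) C (((k + 2 : ℕ) : ℝ) + 2)
      (((k + 2 : ℕ) : ℝ) + 3) (u i) := fun i =>
    { cont := hucont i
      contDiff := huC2 i
      bdry := hbdry i
      decay := hudecay i
      grad := hugrad i
      lap := fun x hx => by
        have h0 : 0 ≤ (cyl x).1 := Real.sqrt_nonneg _
        have h1 : 0 ≤ (cyl x).2 := le_of_lt hx
        rw [← abs_neg, hpde i x hx, abs_of_nonneg (hφnonneg i _ _ h0 h1)]
        refine (hφdecay i _ _ h0 h1).trans ?_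
        gcongr C * ?_
        exact Real.rpow_le_rpow_of_nonpos (by positivity) (by linarith [hcyl x hx])
          (neg_nonpos.2 (by positivity)) }
  let G : Fin 2 → Fin 2 → ℝ → ℝ → ℝ := fun a b r s =>
    φ a r s * u b (EuclideanSpace.single 0 r + EuclideanSpace.single (Fin.last (k + 5)) s)
  have hne : (Fin.last (k + 5)) ≠ 0 := (Fin.last_pos).ne'
  have hG : ∀ a b, ContinuousOn (Function.uncurry (G a b)) (Ici 0 ×ˢ Ici 0) := by
    intro a b
    refine (hφcont a).mul ((hucont b).comp (Continuous.continuousOn ?_) ?_)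
    · have hs : ∀ i : Fin (k + 4 + 2), Continuous fun a : ℝ => EuclideanSpace.single i a := by
        intro i
        have : (fun a : ℝ => EuclideanSpace.single i a)
            = fun a : ℝ => a • (EuclideanSpace.single i 1 : EuclideanSpace ℝ _) := by
          funext a
          ext l
          by_cases h : l = i <;> simp [h]
        rw [this]
        fun_prop
      exact ((hs _).comp continuous_fst).add ((hs _).comp continuous_snd)
    · rintro ⟨r, s⟩ ⟨-, hs⟩
      simpa [hne] using hs
  have hI : ∀ a b, ∫ x in {x | 0 < x (Fin.last (k + 5))}, u b x * laplacian (u a) x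
      = -∫ x in {x : EuclideanSpace ℝ (Fin (k + 4 + 2)) | 0 < x (Fin.last (k + 5))},
          G a b (cyl x).1 (cyl x).2 * x (Fin.castSucc 0) ^ 0 := by
    intro a b
    rw [← integral_neg]
    refine setIntegral_congr_fun (isOpen_halfSpace _).measurableSet fun x hx => ?_
    have hu : u b x = u b (EuclideanSpace.single 0 (cyl x).1
        + EuclideanSpace.single (Fin.last (k + 5)) (cyl x).2) := by
      refine huradial b _ _ ?_ ?_
      · have h2 : (cyl x).1 ^ 2 = ∑ j : Fin (k + 5), (x j.castSucc) ^ 2 :=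
          Real.sq_sqrt (Finset.sum_nonneg fun _ _ => sq_nonneg _)
        rw [← h2, Fin.sum_univ_succ, Finset.sum_eq_zero]
        · simp [hne.symm]
        · intro j _
          simp
      · simp [hne, cyl]
    simp only [G, pow_zero, mul_one, ← hu, ← hpde a x hx]
    ring
  have hgreen := green_halfSpace hC (by positivity) (by linarith)
    (by push_cast; linarith [(Nat.cast_nonneg k : (0 : ℝ) ≤ k)]) (hdec 1) (hdec 0)
  rw [hI, hI, neg_inj, integral_cyl (k + 4) 0 0 (by decide) (hG 0 1),
    integral_cyl (k + 4) 0 0 (by decide) (hG 1 0)] at hgreen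
  have hc : (∫⁻ θ : Metric.sphere (0 : EuclideanSpace ℝ (Fin (k + 4 + 1))) 1,
      ENNReal.ofReal (θ.1 0 ^ 0) ∂(volume :
        Measure (EuclideanSpace ℝ (Fin (k + 4 + 1)))).toSphere).toReal ≠ 0 := by
    simp only [pow_zero, ENNReal.ofReal_one, lintegral_one]
    exact ENNReal.toReal_ne_zero.2
      ⟨Measure.measure_univ_ne_zero.2 (Measure.toSphere_ne_zero _), measure_ne_top _ _⟩
  -- The exponents `(k + 4) + 0` and `k + 4` agree definitionally, so both sides involve one measure.
  have hN := mul_left_cancel₀ hc hgreen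
  have h1 := integral_cyl k 4 0 (by decide) (hG 0 1)
  have h2 := integral_cyl k 4 0 (by decide) (hG 1 0)
  exact h1.trans ((congrArg _ hN).trans h2.symm)


/-- **Lemma 3.2.** Symmetry of integrals of products of the data and the solutions of
the Dirichlet problems `−Δũᵢ = φᵢ(|x'|, x_{n+4})` in `ℝ^{n+4}₊`, `ũᵢ = 0` on `∂ℝ^{n+4}₊`:
`∫_{ℝⁿ₊} φ₁(|x'|,xₙ) u₂(|x'|,xₙ) x₁⁴ dx = ∫_{ℝⁿ₊} φ₂(|x'|,xₙ) u₁(|x'|,xₙ) x₁⁴ dx`. -/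
theorem integration_by_parts_symmetry (n : ℕ) (hn : 2 ≤ n) (C : ℝ)
    (φ : Fin 2 → ℝ → ℝ → ℝ)
    (u : Fin 2 → EuclideanSpace ℝ (Fin (n + 4)) → ℝ)
    (hφcont : ∀ i, ContinuousOn (Function.uncurry (φ i)) (Ici 0 ×ˢ Ici 0))
    (hφnonneg : ∀ i, ∀ r s : ℝ, 0 ≤ r → 0 ≤ s → 0 ≤ φ i r s)
    (hφdecay : ∀ i, ∀ r s : ℝ, 0 ≤ r → 0 ≤ s →
      φ i r s ≤ C * (1 + r + s) ^ (-(n : ℝ) - 3))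
    (hucont : ∀ i, ContinuousOn (u i)
      {x : EuclideanSpace ℝ (Fin (n + 4)) | 0 ≤ x ⟨n + 3, by omega⟩})
    (huC2 : ∀ i, ContDiffOn ℝ 2 (u i)
      {x : EuclideanSpace ℝ (Fin (n + 4)) | 0 < x ⟨n + 3, by omega⟩})
    (huradial : ∀ i, ∀ x y : EuclideanSpace ℝ (Fin (n + 4)),
      (∑ j : Fin (n + 3), (x ⟨j.1, by have := j.isLt; omega⟩) ^ 2)
          = (∑ j : Fin (n + 3), (y ⟨j.1, by have := j.isLt; omega⟩) ^ 2) →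
      x ⟨n + 3, by omega⟩ = y ⟨n + 3, by omega⟩ → u i x = u i y)
    (hpde : ∀ i, ∀ x : EuclideanSpace ℝ (Fin (n + 4)), 0 < x ⟨n + 3, by omega⟩ →
      -laplacian (u i) x
        = φ i (Real.sqrt (∑ j : Fin (n + 3), (x ⟨j.1, by have := j.isLt; omega⟩) ^ 2))
            (x ⟨n + 3, by omega⟩))
    (hbdry : ∀ i, ∀ x : EuclideanSpace ℝ (Fin (n + 4)), x ⟨n + 3, by omega⟩ = 0 → u i x = 0)
    (hudecay : ∀ i, ∀ x : EuclideanSpace ℝ (Fin (n + 4)), 0 ≤ x ⟨n + 3, by omega⟩ →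
      |u i x| ≤ C * (1 + ‖x‖) ^ (-(n : ℝ) - 2))
    (hugrad : ∀ i, ∀ x : EuclideanSpace ℝ (Fin (n + 4)), 0 < x ⟨n + 3, by omega⟩ →
      ‖fderiv ℝ (u i) x‖ ≤ C * (1 + ‖x‖) ^ (-(n : ℝ) - 3)) :
    ∫ x in {x : EuclideanSpace ℝ (Fin n) | 0 < x ⟨n - 1, by omega⟩},
        φ 0 (Real.sqrt (∑ i : Fin (n - 1), (x ⟨i.1, by have := i.isLt; omega⟩) ^ 2))
            (x ⟨n - 1, by omega⟩)
          * u 1 (EuclideanSpace.single (⟨0, by omega⟩ : Fin (n + 4))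
                  (Real.sqrt (∑ i : Fin (n - 1), (x ⟨i.1, by have := i.isLt; omega⟩) ^ 2))
              + EuclideanSpace.single (⟨n + 3, by omega⟩ : Fin (n + 4)) (x ⟨n - 1, by omega⟩))
          * (x ⟨0, by omega⟩) ^ 4
      = ∫ x in {x : EuclideanSpace ℝ (Fin n) | 0 < x ⟨n - 1, by omega⟩},
          φ 1 (Real.sqrt (∑ i : Fin (n - 1), (x ⟨i.1, by have := i.isLt; omega⟩) ^ 2))
              (x ⟨n - 1, by omega⟩)
            * u 0 (EuclideanSpace.single (⟨0, by omega⟩ : Fin (n + 4))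
                    (Real.sqrt (∑ i : Fin (n - 1), (x ⟨i.1, by have := i.isLt; omega⟩) ^ 2))
                + EuclideanSpace.single (⟨n + 3, by omega⟩ : Fin (n + 4)) (x ⟨n - 1, by omega⟩))
            * (x ⟨0, by omega⟩) ^ 4 := by
  obtain ⟨k, rfl⟩ : ∃ k, n = k + 2 := ⟨n - 2, by omega⟩
  exact cyl_symmetry k C φ u hφcont hφnonneg hφdecay hucont huC2 huradial hpde hbdry hudecay hugrad
end

section
/- Let n ≥ 1 be an integer and define u : ℝ^{n+4}₊ → ℝ by u(x) = (x_{n+4}² / (4n(1 + x_{n+4}))) · |x + e_{n+4}|^{−n}. Then for every x ∈ ℝ^{n+4}₊, −Δu(x) = x_{n+4}·|x + e_{n+4}|^{−n−2} − (1 / (2n(1 + x_{n+4})³)) · |x + e_{n+4}|^{−n}. -/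
/-!
Write `t = x_{n+4}`, `w = x + e_{n+4}`, `φ(t) = t² / (4n(1+t))`, so that `u = φ(t) (|w|²)^s` with
`s = -n/2`. The product rule gives `Δu = φ'' |w|^{2s} + 4s φ' (1+t) |w|^{2s-2} + φ Δ(|w|^{2s})`,
and in dimension `n + 4` one has `Δ(|w|^{-n}) = -2n |w|^{-n-2}`. The claim then reduces to
`φ'' = 1 / (2n(1+t)³)` and `2nφ + 2n(1+t)φ' = t`. The second pure directional derivative is computed
in `fderiv_fderiv_profile` for an arbitrary direction; summing it over the standard basis
gives `laplacian_profile`.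
-/

open Set

section Helpers

variable {m : ℕ}

lemma hasFDerivAt_normSq_add (e y : EuclideanSpace ℝ (Fin m)) :
    HasFDerivAt (fun z => ‖z + e‖ ^ 2) ((2 : ℝ) • innerSL ℝ (y + e)) y := by
  have h := ((hasFDerivAt_id (𝕜 := ℝ) y).add_const e).norm_sq
  refine h.congr_fderiv ?_
  ext v
  simp

lemma hasFDerivAt_normSq_add_rpow (e y : EuclideanSpace ℝ (Fin m)) (s : ℝ) (h : y + e ≠ 0) :
    HasFDerivAt (fun z => (‖z + e‖ ^ 2) ^ s)
      ((s * (‖y + e‖ ^ 2) ^ (s - 1)) • (2 : ℝ) • innerSL ℝ (y + e)) y :=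
  (hasFDerivAt_normSq_add e y).rpow_const (Or.inl (by positivity))

lemma hasFDerivAt_comp_coord {p : ℝ → ℝ} {p' : ℝ} (j : Fin m) (y : EuclideanSpace ℝ (Fin m))
    (h : HasDerivAt p p' (y j)) :
    HasFDerivAt (fun z : EuclideanSpace ℝ (Fin m) => p (z j))
      (p' • (EuclideanSpace.proj j : EuclideanSpace ℝ (Fin m) →L[ℝ] ℝ)) y :=
  h.comp_hasFDerivAt y (EuclideanSpace.proj j : EuclideanSpace ℝ (Fin m) →L[ℝ] ℝ).hasFDerivAt

/-- Second pure directional derivative of `φ(y_j) (|y + e|²)^s`, for `φ` with first and second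
derivatives `φ₁`, `φ₂` on the positive axis. -/
lemma fderiv_fderiv_profile {φ φ₁ φ₂ : ℝ → ℝ} (h₁ : ∀ t, 0 < t → HasDerivAt φ (φ₁ t) t)
    (h₂ : ∀ t, 0 < t → HasDerivAt φ₁ (φ₂ t) t) (j : Fin m) (e : EuclideanSpace ℝ (Fin m))
    (he : 0 ≤ e j) (s : ℝ) (x v : EuclideanSpace ℝ (Fin m)) (hx : 0 < x j) :
    fderiv ℝ (fun y => fderiv ℝ (fun z => φ (z j) * (‖z + e‖ ^ 2) ^ s) y v) x v
      = φ₂ (x j) * (v j) ^ 2 * (‖x + e‖ ^ 2) ^ s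
        + 4 * s * φ₁ (x j) * v j * (‖x + e‖ ^ 2) ^ (s - 1) * inner ℝ (x + e) v
        + φ (x j) * (4 * s * (s - 1) * (‖x + e‖ ^ 2) ^ (s - 2) * (inner ℝ (x + e) v) ^ 2
          + 2 * s * (‖x + e‖ ^ 2) ^ (s - 1) * ‖v‖ ^ 2) := by
  have hne : ∀ y : EuclideanSpace ℝ (Fin m), 0 < y j → y + e ≠ 0 := by
    intro y hy h0
    have := congrArg (fun z : EuclideanSpace ℝ (Fin m) => z j) h0
    simp at this
    linarith
  -- The first derivative is needed on a neighbourhood of `x`, hence on the open half-space.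
  have hev : (fun y => fderiv ℝ (fun z => φ (z j) * (‖z + e‖ ^ 2) ^ s) y v) =ᶠ[nhds x]
      fun y => φ (y j) * ((s * (‖y + e‖ ^ 2) ^ (s - 1)) * (2 * inner ℝ v (y + e)))
        + (‖y + e‖ ^ 2) ^ s * (φ₁ (y j) * v j) := by
    have hopen : IsOpen {y : EuclideanSpace ℝ (Fin m) | 0 < y j} :=
      isOpen_lt continuous_const (by fun_prop)
    filter_upwards [hopen.mem_nhds hx] with y hy
    have hd := (hasFDerivAt_comp_coord j y (h₁ _ hy)).mul
      (hasFDerivAt_normSq_add_rpow e y s (hne y hy))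
    have hd' := congrArg (fun L : EuclideanSpace ℝ (Fin m) →L[ℝ] ℝ => L v) hd.fderiv
    refine hd'.trans ?_
    have hc : inner ℝ v (y + e) = inner ℝ (y + e) v := real_inner_comm _ _
    have hp : (EuclideanSpace.proj j : EuclideanSpace ℝ (Fin m) →L[ℝ] ℝ) v = v j := rfl
    simp only [add_apply, smul_apply, smul_eq_mul, innerSL_apply_apply, hp, hc]
  rw [hev.fderiv_eq]
  have hI : HasFDerivAt (fun y => 2 * inner ℝ v (y + e)) ((2 : ℝ) • innerSL ℝ v) x :=
    ((innerSL ℝ v).hasFDerivAt.comp x ((hasFDerivAt_id (𝕜 := ℝ) x).add_const e)).const_mul 2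
  have hA := (hasFDerivAt_comp_coord j x (h₁ _ hx)).mul
    (((hasFDerivAt_normSq_add_rpow e x (s - 1) (hne x hx)).const_mul s).mul hI)
  have hB := (hasFDerivAt_normSq_add_rpow e x s (hne x hx)).mul
    ((hasFDerivAt_comp_coord j x (h₂ _ hx)).mul_const (v j))
  have hd' := congrArg (fun L : EuclideanSpace ℝ (Fin m) →L[ℝ] ℝ => L v) (hA.add hB).fderiv
  refine hd'.trans ?_
  have hp : (EuclideanSpace.proj j : EuclideanSpace ℝ (Fin m) →L[ℝ] ℝ) v = v j := rfl
  have hs : s - 1 - 1 = s - 2 := by ring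
  have hc : inner ℝ v (x + e) = inner ℝ (x + e) v := real_inner_comm _ _
  simp only [add_apply, smul_apply, Pi.mul_apply, smul_eq_mul,
    innerSL_apply_apply, hp, hs, hc, real_inner_self_eq_norm_sq]
  ring

/-- `Δ(φ |w|^{2s}) = φ'' |w|^{2s} + 4s φ' w_j |w|^{2s-2} + φ · 2s(2s - 2 + m) |w|^{2s-2}` for
`w = y + e` and `φ` evaluated at `y_j`, on the half-space `y_j > 0`. -/
lemma laplacian_profile {φ φ₁ φ₂ : ℝ → ℝ} (h₁ : ∀ t, 0 < t → HasDerivAt φ (φ₁ t) t)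
    (h₂ : ∀ t, 0 < t → HasDerivAt φ₁ (φ₂ t) t) (j : Fin m) (e : EuclideanSpace ℝ (Fin m))
    (he : 0 ≤ e j) (s : ℝ) (x : EuclideanSpace ℝ (Fin m)) (hx : 0 < x j) :
    laplacian (fun z => φ (z j) * (‖z + e‖ ^ 2) ^ s) x
      = φ₂ (x j) * (‖x + e‖ ^ 2) ^ s
        + 4 * s * φ₁ (x j) * (x j + e j) * (‖x + e‖ ^ 2) ^ (s - 1)
        + φ (x j) * (2 * s * (2 * s - 2 + m)) * (‖x + e‖ ^ 2) ^ (s - 1) := by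
  have hpos : 0 < ‖x + e‖ ^ 2 := by
    have : x + e ≠ 0 := by
      intro h0
      have := congrArg (fun z : EuclideanSpace ℝ (Fin m) => z j) h0
      simp at this
      linarith
    positivity
  have hpow : (‖x + e‖ ^ 2) ^ (s - 2) * ‖x + e‖ ^ 2 = (‖x + e‖ ^ 2) ^ (s - 1) := by
    rw [← Real.rpow_add_one hpos.ne']
    congr 1
    ring
  have hsum : ∑ i, ((x + e) i) ^ 2 = ‖x + e‖ ^ 2 := (EuclideanSpace.real_norm_sq_eq _).symm
  have hterm : ∀ i : Fin m, fderiv ℝ (fun y => fderiv ℝ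
      (fun z => φ (z j) * (‖z + e‖ ^ 2) ^ s) y (EuclideanSpace.single i 1)) x
        (EuclideanSpace.single i 1)
      = (if j = i then φ₂ (x j) * (‖x + e‖ ^ 2) ^ s
          + 4 * s * φ₁ (x j) * (‖x + e‖ ^ 2) ^ (s - 1) * (x + e) i else 0)
        + (φ (x j) * (4 * s * (s - 1) * (‖x + e‖ ^ 2) ^ (s - 2)) * ((x + e) i) ^ 2
          + φ (x j) * (2 * s * (‖x + e‖ ^ 2) ^ (s - 1))) := by
    intro i
    rw [fderiv_fderiv_profile h₁ h₂ j e he s x _ hx]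
    have hin : inner ℝ (x + e) (EuclideanSpace.single i (1 : ℝ)) = (x + e) i := by
      simp [EuclideanSpace.inner_single_right]
    have hnorm : ‖EuclideanSpace.single i (1 : ℝ)‖ = 1 := by simp
    have hco : (EuclideanSpace.single i (1 : ℝ)) j = if j = i then 1 else 0 := by
      simp
    rw [hin, hnorm, hco]
    split_ifs <;> ring
  unfold laplacian
  rw [Finset.sum_congr rfl fun i _ => hterm i, Finset.sum_add_distrib, Finset.sum_add_distrib,
    Finset.sum_ite_eq, ← Finset.mul_sum, hsum]
  simp only [Finset.mem_univ, if_true, Finset.sum_const, Finset.card_univ, Fintype.card_fin,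
    nsmul_eq_mul, PiLp.add_apply]
  linear_combination (φ (x j) * (4 * s * (s - 1))) * hpow

end Helpers

/-- For `u(x) = (x_{n+4}²/(4n(1+x_{n+4}))) |x+e_{n+4}|^{−n}` one has
`−Δu = x_{n+4} |x+e_{n+4}|^{−n−2} − (1/(2n(1+x_{n+4})³)) |x+e_{n+4}|^{−n}` in `ℝ^{n+4}₊`. -/
theorem subsolution_computation_nonumbilic (n : ℕ) (hn : 1 ≤ n)
    (x : EuclideanSpace ℝ (Fin (n + 4))) (hx : 0 < x ⟨n + 3, by omega⟩) :
    -laplacian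
        (fun y : EuclideanSpace ℝ (Fin (n + 4)) =>
          (y ⟨n + 3, by omega⟩) ^ 2 / (4 * (n : ℝ) * (1 + y ⟨n + 3, by omega⟩))
            * ‖y + EuclideanSpace.single (⟨n + 3, by omega⟩ : Fin (n + 4)) (1 : ℝ)‖
                ^ (-(n : ℝ))) x
      = x ⟨n + 3, by omega⟩
            * ‖x + EuclideanSpace.single (⟨n + 3, by omega⟩ : Fin (n + 4)) (1 : ℝ)‖
                ^ (-(n : ℝ) - 2)
          - 1 / (2 * (n : ℝ) * (1 + x ⟨n + 3, by omega⟩) ^ 3)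
            * ‖x + EuclideanSpace.single (⟨n + 3, by omega⟩ : Fin (n + 4)) (1 : ℝ)‖
                ^ (-(n : ℝ)) := by
  have hn0 : (n : ℝ) ≠ 0 := by
    have : n ≠ 0 := by omega
    exact_mod_cast this
  have h₁ : ∀ t : ℝ, 0 < t → HasDerivAt (fun t : ℝ => t ^ 2 / (4 * (n : ℝ) * (1 + t)))
      ((t ^ 2 + 2 * t) / (4 * n * (1 + t) ^ 2)) t := by
    intro t ht
    have ht' : 1 + t ≠ 0 := by positivity
    have h := (hasDerivAt_pow 2 t).div (((hasDerivAt_id t).const_add 1).const_mul (4 * (n : ℝ)))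
      (by simp [ht']; omega)
    refine h.congr_deriv ?_
    simp only [id]
    field_simp
    push_cast
    ring
  have h₂ : ∀ t : ℝ, 0 < t → HasDerivAt
      (fun t : ℝ => (t ^ 2 + 2 * t) / (4 * (n : ℝ) * (1 + t) ^ 2))
      (1 / (2 * n * (1 + t) ^ 3)) t := by
    intro t ht
    have ht' : 1 + t ≠ 0 := by positivity
    have h := ((hasDerivAt_pow 2 t).add ((hasDerivAt_id t).const_mul 2)).div
      ((((hasDerivAt_id t).const_add 1).pow 2).const_mul (4 * (n : ℝ)))
      (by simp [ht']; omega)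
    refine h.congr_deriv ?_
    simp only [id, Pi.add_apply, Pi.pow_apply]
    field_simp
    push_cast
    ring
  have hrpow : ∀ (z : EuclideanSpace ℝ (Fin (n + 4))) (a : ℝ), ‖z‖ ^ a = (‖z‖ ^ 2) ^ (a / 2) := by
    intro z a
    rw [← Real.rpow_natCast_mul (norm_nonneg z)]
    congr 1
    push_cast
    ring
  simp only [hrpow _ (-(n : ℝ)), hrpow _ (-(n : ℝ) - 2)]
  rw [laplacian_profile h₁ h₂ ⟨n + 3, by omega⟩
    (EuclideanSpace.single ⟨n + 3, by omega⟩ 1) (by simp) _ x hx]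
  have hs : (-(n : ℝ) - 2) / 2 = -(n : ℝ) / 2 - 1 := by ring
  rw [hs]
  have ht' : 1 + x ⟨n + 3, by omega⟩ ≠ 0 := by positivity
  simp only [PiLp.single_apply, if_true]
  push_cast
  generalize (‖x + EuclideanSpace.single (⟨n + 3, by omega⟩ : Fin (n + 4)) (1 : ℝ)‖ ^ 2)
    ^ (-(n : ℝ) / 2 - 1) = A
  generalize (‖x + EuclideanSpace.single (⟨n + 3, by omega⟩ : Fin (n + 4)) (1 : ℝ)‖ ^ 2)
    ^ (-(n : ℝ) / 2) = B
  field_simp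
  ring
end

section
/- Let n ≥ 1 be an integer. Suppose Ṽ : {x ∈ ℝ^{n+4} : x_{n+4} ≥ 0} → ℝ is continuous, twice continuously differentiable on the open half-space ℝ^{n+4}₊, satisfies −ΔṼ(x) = x_{n+4}·|x + e_{n+4}|^{−n−2} for all x ∈ ℝ^{n+4}₊, Ṽ(x) = 0 whenever x_{n+4} = 0, and Ṽ(x) → 0 as |x| → ∞. Then Ṽ(x) ≤ (x_{n+4} / (4n)) · |x + e_{n+4}|^{−n} for every x with x_{n+4} ≥ 0. -/
/-!
The function `W(x) = (x_N / 4n) |x + e|^{-n}`, with `N = n + 4` and `e = e_N`, is a strict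
supersolution: for the choice `N = n + 4` a direct computation gives
`-ΔW = (x_N + 1/2) |x + e|^{-n-2}` on the half-space (`laplacian_barrier`), which exceeds `-ΔV`
by `|x + e|^{-n-2} / 2`. So `V - W` is strictly subharmonic and cannot have an interior local
maximum (`laplacian_nonpos_of_isLocalMax`). If `V - W` were positive somewhere, decay of `V`
together with `W ≥ 0` would make it attain a positive maximum over the closed half-space, and
this maximum would be interior because `V - W = 0` on the boundary.
-/

open Set

open Filter Topology

/-- A positive second derivative at a critical point forces a local minimum; being also a local
maximum, the function would be locally constant, so the second derivative would vanish. -/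
lemma deriv_deriv_nonpos_of_isLocalMax {g : ℝ → ℝ} {a : ℝ} (h : IsLocalMax g a)
    (hc : ContinuousAt g a) : deriv (deriv g) a ≤ 0 := by
  by_contra! hpos
  have hmin : IsLocalMin g a := isLocalMin_of_deriv_deriv_pos hpos h.deriv_eq_zero hc
  have hconst : g =ᶠ[𝓝 a] fun _ => g a := by
    filter_upwards [h, hmin] with y h1 h2 using le_antisymm h1 h2
  have := hconst.deriv.deriv_eq
  simp at this
  linarith

section
variable {m : ℕ}

lemma contDiffAt_two_fderiv_apply {f : EuclideanSpace ℝ (Fin m) → ℝ} {x : EuclideanSpace ℝ (Fin m)}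
    (hf : ContDiffAt ℝ 2 f x) (v : EuclideanSpace ℝ (Fin m)) :
    DifferentiableAt ℝ (fun y => fderiv ℝ f y v) x := by
  have h1 : ContDiffAt ℝ 1 (fderiv ℝ f) x := hf.fderiv_right (by norm_num)
  have h2 := h1.differentiableAt (by norm_num)
  fun_prop

lemma laplacian_nonpos_of_isLocalMax {f : EuclideanSpace ℝ (Fin m) → ℝ}
    {x : EuclideanSpace ℝ (Fin m)} (hf : ContDiffAt ℝ 2 f x) (h : IsLocalMax f x) :
    laplacian f x ≤ 0 := by
  unfold laplacian
  refine Finset.sum_nonpos fun i _ => ?_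
  set v : EuclideanSpace ℝ (Fin m) := EuclideanSpace.single i 1
  have hl : ∀ s : ℝ, HasDerivAt (fun s : ℝ => x + s • v) v s := fun s => by
    simpa using ((hasDerivAt_id s).smul_const v).const_add x
  have hx0 : x + (0 : ℝ) • v = x := by simp
  have hcl : Tendsto (fun s : ℝ => x + s • v) (𝓝 0) (𝓝 x) := by
    simpa only [hx0] using (hl 0).continuousAt.tendsto
  have hd : ∀ᶠ y in 𝓝 x, DifferentiableAt ℝ f y :=
    (hf.eventually (by simp)).mono fun y hy => hy.differentiableAt (by norm_num)
  have h1 : deriv (fun s : ℝ => f (x + s • v)) =ᶠ[𝓝 0] fun s => fderiv ℝ f (x + s • v) v := by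
    filter_upwards [hcl.eventually hd] with s hs
    exact (hs.hasFDerivAt.comp_hasDerivAt s (hl s)).deriv
  have h2 : deriv (deriv (fun s : ℝ => f (x + s • v))) 0
      = fderiv ℝ (fun y => fderiv ℝ f y v) x v := by
    rw [h1.deriv_eq]
    have h3 := (contDiffAt_two_fderiv_apply hf v).hasFDerivAt
    rw [← hx0] at h3
    have h4 := (h3.comp_hasDerivAt (0 : ℝ) (hl 0)).deriv
    rw [hx0] at h4
    exact h4
  rw [← h2]
  refine deriv_deriv_nonpos_of_isLocalMax ?_ ?_
  · have := hcl.eventually h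
    filter_upwards [this] with s hs
    simpa using hs
  · refine ContinuousAt.comp (f := fun s : ℝ => x + s • v) (g := f) ?_ (hl 0).continuousAt
    simpa using hf.continuousAt

lemma laplacian_sub {f g : EuclideanSpace ℝ (Fin m) → ℝ} {x : EuclideanSpace ℝ (Fin m)}
    (hf : ContDiffAt ℝ 2 f x) (hg : ContDiffAt ℝ 2 g x) :
    laplacian (fun y => f y - g y) x = laplacian f x - laplacian g x := by
  unfold laplacian
  rw [← Finset.sum_sub_distrib]
  refine Finset.sum_congr rfl fun i _ => ?_
  have hd : ∀ {f : EuclideanSpace ℝ (Fin m) → ℝ}, ContDiffAt ℝ 2 f x →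
      ∀ᶠ y in 𝓝 x, DifferentiableAt ℝ f y := fun hf =>
    (hf.eventually (by simp)).mono fun y hy => hy.differentiableAt (by norm_num)
  have h1 : (fun y => fderiv ℝ (fun y => f y - g y) y (EuclideanSpace.single i 1)) =ᶠ[𝓝 x]
      fun y => fderiv ℝ f y (EuclideanSpace.single i 1)
        - fderiv ℝ g y (EuclideanSpace.single i 1) := by
    filter_upwards [hd hf, hd hg] with y h1 h2
    rw [fderiv_fun_sub h1 h2]
    rfl
  rw [h1.fderiv_eq, fderiv_fun_sub (contDiffAt_two_fderiv_apply hf _)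
    (contDiffAt_two_fderiv_apply hg _)]
  rfl

lemma hasFDerivAt_normSq_rpow (e y : EuclideanSpace ℝ (Fin m)) (hy : y + e ≠ 0) (p : ℝ) :
    HasFDerivAt (fun y => (‖y + e‖ ^ 2) ^ p)
      ((p * (‖y + e‖ ^ 2) ^ (p - 1)) • ((2 : ℝ) • innerSL ℝ (y + e))) y := by
  have h1 : HasFDerivAt (fun y => ‖y + e‖ ^ 2) ((2 : ℝ) • innerSL ℝ (y + e)) y := by
    have := ((hasFDerivAt_id y).add_const e).norm_sq
    refine this.congr_fderiv ?_
    ext v; simp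
  exact h1.rpow_const (Or.inl (by positivity))

lemma hasFDerivAt_coord (k : Fin m) (y : EuclideanSpace ℝ (Fin m)) :
    HasFDerivAt (fun y : EuclideanSpace ℝ (Fin m) => y k)
      (EuclideanSpace.proj k : EuclideanSpace ℝ (Fin m) →L[ℝ] ℝ) y :=
  (EuclideanSpace.proj k : EuclideanSpace ℝ (Fin m) →L[ℝ] ℝ).hasFDerivAt

/-- `Δ(y_k |y + e_k|^{2a})` in dimension `m`, with the norm written as `(|·|²)^a` so that the
differentiated function is smooth away from `-e_k`. -/
lemma laplacian_coord_mul (k : Fin m) (a : ℝ) (x : EuclideanSpace ℝ (Fin m)) (hx : 0 < x k) :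
    laplacian (fun y => y k * (‖y + EuclideanSpace.single k (1 : ℝ)‖ ^ 2) ^ a) x
      = a * (4 * (x k + 1) + x k * (4 * (a - 1) + 2 * m))
        * (‖x + EuclideanSpace.single k (1 : ℝ)‖ ^ 2) ^ (a - 1) := by
  set e : EuclideanSpace ℝ (Fin m) := EuclideanSpace.single k (1 : ℝ) with he
  have hne : ∀ y : EuclideanSpace ℝ (Fin m), 0 < y k → y + e ≠ 0 := fun y hy h0 => by
    have := congrArg (fun z : EuclideanSpace ℝ (Fin m) => z k) h0
    simp [he] at this
    linarith
  have hcont : Continuous fun y : EuclideanSpace ℝ (Fin m) => y k := by fun_prop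
  have hev : ∀ᶠ y in 𝓝 x, 0 < y k := hcont.continuousAt.eventually (lt_mem_nhds hx)
  set q := ‖x + e‖ ^ 2 with hq
  have hq0 : 0 < q := by have := norm_pos_iff.2 (hne x hx); positivity
  have key : ∀ i : Fin m,
      fderiv ℝ (fun y => fderiv ℝ (fun y => y k * (‖y + e‖ ^ 2) ^ a) y
        (EuclideanSpace.single i 1)) x (EuclideanSpace.single i 1)
      = (if k = i then 4 * a * q ^ (a - 1) * (x k + 1) else 0)
        + 4 * x k * a * (a - 1) * q ^ (a - 2) * ((x + e) i) ^ 2 + 2 * x k * a * q ^ (a - 1) := by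
    intro i
    have h1 : (fun y => fderiv ℝ (fun y => y k * (‖y + e‖ ^ 2) ^ a) y
        (EuclideanSpace.single i 1)) =ᶠ[𝓝 x] fun y =>
          y k * ((‖y + e‖ ^ 2) ^ (a - 1) * (2 * a * (y i + e i)))
            + (if k = i then 1 else 0) * (‖y + e‖ ^ 2) ^ a := by
      filter_upwards [hev] with y hy
      rw [((hasFDerivAt_coord k y).fun_mul (hasFDerivAt_normSq_rpow e y (hne y hy) a)).fderiv]
      simp [EuclideanSpace.inner_single_right]
      ring
    rw [h1.fderiv_eq]
    have hc := ((hasFDerivAt_coord i x).add_const (e i)).const_mul (2 * a)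
    have h2 := ((hasFDerivAt_coord k x).fun_mul
      ((hasFDerivAt_normSq_rpow e x (hne x hx) (a - 1)).fun_mul hc)).fun_add
      ((hasFDerivAt_normSq_rpow e x (hne x hx) a).const_mul (if k = i then (1 : ℝ) else 0))
    have h3 : a - 1 - 1 = a - 2 := by ring
    refine (congrArg (fun L => L (EuclideanSpace.single i 1)) h2.fderiv).trans ?_
    by_cases hki : k = i
    · subst hki
      simp [EuclideanSpace.inner_single_right, h3, he]
      ring
    · simp [EuclideanSpace.inner_single_right, ← hq, h3, hki]
      ring
  unfold laplacian
  rw [Finset.sum_congr rfl fun i _ => key i, Finset.sum_add_distrib, Finset.sum_add_distrib,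
    Finset.sum_ite_eq, ← Finset.mul_sum]
  have hs : ∑ i, ((x + e) i) ^ 2 = q := by
    rw [hq, EuclideanSpace.norm_sq_eq]
    simp
  have hp : q ^ (a - 1) = q ^ (a - 2) * q := by
    rw [← Real.rpow_add_one hq0.ne']; congr 1; ring
  rw [hs]
  simp only [Finset.mem_univ, if_true, Finset.sum_const, Finset.card_univ, Fintype.card_fin,
    nsmul_eq_mul]
  rw [hp]
  ring

end

lemma norm_rpow_eq {E : Type*} [NormedAddCommGroup E] (z : E) (p : ℝ) :
    ‖z‖ ^ p = (‖z‖ ^ 2) ^ (p / 2) := by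
  rw [← Real.rpow_natCast_mul (norm_nonneg z)]
  congr 1
  push_cast
  ring

lemma laplacian_const_mul {m : ℕ} (c : ℝ) (f : EuclideanSpace ℝ (Fin m) → ℝ)
    (x : EuclideanSpace ℝ (Fin m)) :
    laplacian (fun y => c * f y) x = c * laplacian f x := by
  unfold laplacian
  rw [Finset.mul_sum]
  refine Finset.sum_congr rfl fun i _ => ?_
  have h : ∀ g : EuclideanSpace ℝ (Fin m) → ℝ, ∀ y v,
      fderiv ℝ (fun y => c * g y) y v = c * fderiv ℝ g y v := fun g y v => by
    have := congrFun (fderiv_const_smul_field (𝕜 := ℝ) (f := g) c) y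
    exact congrArg (fun L => L v) this
  simp only [h]

/-- The comparison function satisfies `-ΔW = (x_k + 1/2) |x + e_k|^{-n-2}`; the dimension `n + 4`
is what makes the coefficient of `x_k` equal to `1`. -/
lemma laplacian_barrier (n : ℕ) (hn : 1 ≤ n) (k : Fin (n + 4))
    (x : EuclideanSpace ℝ (Fin (n + 4))) (hx : 0 < x k) :
    laplacian (fun y => y k / (4 * (n : ℝ))
        * ‖y + EuclideanSpace.single k (1 : ℝ)‖ ^ (-(n : ℝ))) x
      = -(x k + 1 / 2) * ‖x + EuclideanSpace.single k (1 : ℝ)‖ ^ (-(n : ℝ) - 2) := by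
  have hn0 : (n : ℝ) ≠ 0 := by positivity
  have h1 : (fun y : EuclideanSpace ℝ (Fin (n + 4)) => y k / (4 * (n : ℝ))
        * ‖y + EuclideanSpace.single k (1 : ℝ)‖ ^ (-(n : ℝ)))
      = fun y => (1 / (4 * (n : ℝ))) *
        (y k * (‖y + EuclideanSpace.single k (1 : ℝ)‖ ^ 2) ^ (-(n : ℝ) / 2)) := by
    funext y
    rw [norm_rpow_eq]
    ring
  have h2 : (-(n : ℝ) - 2) / 2 = -(n : ℝ) / 2 - 1 := by ring
  rw [h1, laplacian_const_mul, laplacian_coord_mul k _ x hx,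
    norm_rpow_eq (x + EuclideanSpace.single k (1 : ℝ)) (-(n : ℝ) - 2), h2]
  push_cast
  field_simp
  ring

/-- Upper bound for the solution `Ṽ` of `−ΔṼ = x_{n+4}|x+e_{n+4}|^{−n−2}` in `ℝ^{n+4}₊`
with zero boundary values and decay at infinity:
`Ṽ(x) ≤ (x_{n+4}/(4n)) |x+e_{n+4}|^{−n}` on the closed half-space. -/
theorem V_upper_bound (n : ℕ) (hn : 1 ≤ n)
    (V : EuclideanSpace ℝ (Fin (n + 4)) → ℝ)
    (hVcont : ContinuousOn V {x : EuclideanSpace ℝ (Fin (n + 4)) | 0 ≤ x ⟨n + 3, by omega⟩})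
    (hVC2 : ContDiffOn ℝ 2 V {x : EuclideanSpace ℝ (Fin (n + 4)) | 0 < x ⟨n + 3, by omega⟩})
    (hpde : ∀ x : EuclideanSpace ℝ (Fin (n + 4)), 0 < x ⟨n + 3, by omega⟩ →
      -laplacian V x
        = x ⟨n + 3, by omega⟩
            * ‖x + EuclideanSpace.single (⟨n + 3, by omega⟩ : Fin (n + 4)) (1 : ℝ)‖
                ^ (-(n : ℝ) - 2))
    (hbdry : ∀ x : EuclideanSpace ℝ (Fin (n + 4)), x ⟨n + 3, by omega⟩ = 0 → V x = 0)
    (hdecay : ∀ ε > (0 : ℝ), ∃ R : ℝ, ∀ x : EuclideanSpace ℝ (Fin (n + 4)),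
      0 ≤ x ⟨n + 3, by omega⟩ → R ≤ ‖x‖ → |V x| < ε) :
    ∀ x : EuclideanSpace ℝ (Fin (n + 4)), 0 ≤ x ⟨n + 3, by omega⟩ →
      V x ≤ x ⟨n + 3, by omega⟩ / (4 * (n : ℝ))
          * ‖x + EuclideanSpace.single (⟨n + 3, by omega⟩ : Fin (n + 4)) (1 : ℝ)‖
              ^ (-(n : ℝ)) := by
  intro x₀ hx₀
  set k : Fin (n + 4) := ⟨n + 3, by omega⟩ with hk
  set e : EuclideanSpace ℝ (Fin (n + 4)) := EuclideanSpace.single k (1 : ℝ) with he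
  set W : EuclideanSpace ℝ (Fin (n + 4)) → ℝ :=
    fun y => y k / (4 * (n : ℝ)) * ‖y + e‖ ^ (-(n : ℝ)) with hW
  change V x₀ ≤ W x₀
  by_contra! hlt
  have hne : ∀ y : EuclideanSpace ℝ (Fin (n + 4)), 0 ≤ y k → y + e ≠ 0 := fun y hy h0 => by
    have := congrArg (fun z : EuclideanSpace ℝ (Fin (n + 4)) => z k) h0
    simp [he] at this
    linarith
  have hWnn : ∀ y : EuclideanSpace ℝ (Fin (n + 4)), 0 ≤ y k → 0 ≤ W y := fun y hy => by
    simp only [hW]; positivity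
  have hWC2 : ∀ y : EuclideanSpace ℝ (Fin (n + 4)), 0 ≤ y k → ContDiffAt ℝ 2 W y := fun y hy => by
    have h1 : ContDiffAt ℝ 2 (fun y : EuclideanSpace ℝ (Fin (n + 4)) => y k / (4 * (n : ℝ))) y :=
      (EuclideanSpace.proj k : EuclideanSpace ℝ (Fin (n + 4)) →L[ℝ] ℝ).contDiff.contDiffAt.div_const _
    have h2 : ContDiffAt ℝ 2 (fun y => ‖y + e‖) y :=
      (contDiffAt_id.add contDiffAt_const).norm ℝ (hne y hy)
    exact h1.mul (h2.rpow_const_of_ne (norm_ne_zero_iff.2 (hne y hy)))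
  have hkc : Continuous fun y : EuclideanSpace ℝ (Fin (n + 4)) => y k := by fun_prop
  have hopen : IsOpen {y : EuclideanSpace ℝ (Fin (n + 4)) | 0 < y k} :=
    isOpen_lt continuous_const hkc
  have hclosed : IsClosed {y : EuclideanSpace ℝ (Fin (n + 4)) | 0 ≤ y k} :=
    isClosed_le continuous_const hkc
  obtain ⟨R, hR⟩ := hdecay (V x₀ - W x₀) (by linarith)
  have hK : IsCompact ({y : EuclideanSpace ℝ (Fin (n + 4)) | 0 ≤ y k} ∩ Metric.closedBall 0 R) :=
    (isCompact_closedBall 0 R).inter_left hclosed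
  have hfc : ContinuousOn (fun y => V y - W y) {y | 0 ≤ y k} :=
    hVcont.sub fun y hy => (hWC2 y hy).continuousAt.continuousWithinAt
  -- Beyond radius `R` the difference is below its value at `x₀`, as `W ≥ 0`.
  have hfar : ∀ y : EuclideanSpace ℝ (Fin (n + 4)), 0 ≤ y k → R ≤ ‖y‖ →
      V y - W y < V x₀ - W x₀ := fun y hy hyR => by
    have h1 := (abs_lt.1 (hR y hy hyR)).2
    have h2 := hWnn y hy
    linarith
  have hx₀R : ‖x₀‖ ≤ R := by
    by_contra! h
    exact lt_irrefl _ (hfar x₀ hx₀ h.le)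
  obtain ⟨x, ⟨hx, -⟩, hmax⟩ := hK.exists_isMaxOn ⟨x₀, hx₀, by simpa using hx₀R⟩
    (hfc.mono inter_subset_left)
  have hx₀x : V x₀ - W x₀ ≤ V x - W x := hmax ⟨hx₀, by simpa using hx₀R⟩
  have hglob : ∀ y : EuclideanSpace ℝ (Fin (n + 4)), 0 ≤ y k → V y - W y ≤ V x - W x := by
    intro y hy
    rcases le_total ‖y‖ R with h | h
    · exact hmax ⟨hy, by simpa using h⟩
    · exact (hfar y hy h).le.trans hx₀x
  have hxpos : 0 < x k := by
    refine lt_of_le_of_ne hx fun h0 => ?_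
    have h1 := hbdry x h0.symm
    have h2 := hWnn x hx
    linarith
  have hloc : IsLocalMax (fun y => V y - W y) x := by
    filter_upwards [hopen.mem_nhds hxpos] with y hy using hglob y (le_of_lt hy)
  have hVx : ContDiffAt ℝ 2 V x := hVC2.contDiffAt (hopen.mem_nhds hxpos)
  have hlap := laplacian_nonpos_of_isLocalMax (hVx.sub (hWC2 x hx)) hloc
  rw [laplacian_sub hVx (hWC2 x hx), laplacian_barrier n hn k x hxpos] at hlap
  have hp := hpde x hxpos
  have hpos : 0 < ‖x + e‖ ^ (-(n : ℝ) - 2) := Real.rpow_pos_of_pos (norm_pos_iff.2 (hne x hx)) _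
  linarith
end

section
/- Let n ≥ 1 be an integer and define v : ℝ^{n+4}₊ → ℝ by v(x) = (1/(2(n+2))) · [ (1/2)x_{n+4}² − x_{n+4} + log(1 + x_{n+4}) ] · |x + e_{n+4}|^{−n−2}. Then for every x ∈ ℝ^{n+4}₊, −Δv(x) ≤ x_{n+4}²·|x + e_{n+4}|^{−n−4}. -/
/-!
Write `t = x_{n+4}`, `r = |x + e_{n+4}|`, `a = -(n+2)`, `c = 1 / (2(n+2))` and
`g(t) = t²/2 - t + log (1 + t)`, so that `v = c g(t) r^a`. Since `a` is two minus the dimension,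
`r^a` is harmonic away from `-e_{n+4}`, and the product rule leaves
`Δv = c (g''(t) r^a + 2 a g'(t) (1 + t) r^(a-2))`. Now `g'(t) (1 + t) = t²` and `2 a c = -1`, hence
`-Δv = t² r^(a-2) - c g''(t) r^a`, and `g''(t) = 1 - 1/(1+t)² ≥ 0` gives the bound.

The product rule for the first derivatives of `c g(y_L) |y + e|^p` is `hasFDerivAt_profile_mul`, for
a general profile `g`; applying it twice and summing over the coordinates gives the Laplacian,
`laplacian_profile_mul`.
-/

open Set

/-- The gradient of `|y + e|^p`. The exponent is an arbitrary real, since the pole `y = -e` is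
excluded. -/
lemma hasFDerivAt_norm_add_rpow {m : ℕ} (e y : EuclideanSpace ℝ (Fin m)) (hy : y + e ≠ 0) (p : ℝ) :
    HasFDerivAt (fun z => ‖z + e‖ ^ p) ((p * ‖y + e‖ ^ (p - 2)) • innerSL ℝ (y + e)) y := by
  have hpos : 0 < ‖y + e‖ := norm_pos_iff.2 hy
  have h1 : HasFDerivAt (fun z : EuclideanSpace ℝ (Fin m) => z + e)
      (ContinuousLinearMap.id ℝ _) y := (hasFDerivAt_id y).add_const e
  have h2 := h1.norm_sq.rpow_const (p := p / 2) (Or.inl (by positivity))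
  have hpow : ∀ (s : ℝ) (z : EuclideanSpace ℝ (Fin m)), (‖z + e‖ ^ 2) ^ s = ‖z + e‖ ^ (2 * s) := by
    intro s z
    rw [← Real.rpow_natCast, ← Real.rpow_mul (norm_nonneg _)]
    norm_num
  simp only [hpow] at h2
  simp only [show 2 * (p / 2) = p by ring, show 2 * (p / 2 - 1) = p - 2 by ring] at h2
  refine h2.congr_fderiv ?_
  rw [ContinuousLinearMap.comp_id, ← Nat.cast_smul_eq_nsmul ℝ, smul_smul]
  congr 1
  push_cast
  ring

lemma innerSL_single {m : ℕ} (w : EuclideanSpace ℝ (Fin m)) (i : Fin m) :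
    innerSL ℝ w (EuclideanSpace.single i 1) = w i := by
  simp [EuclideanSpace.inner_single_right]

lemma proj_apply_coord {m : ℕ} (w : EuclideanSpace ℝ (Fin m)) (i : Fin m) :
    (EuclideanSpace.proj i : EuclideanSpace ℝ (Fin m) →L[ℝ] ℝ) w = w i := rfl

/-- Product rule for a function of the single coordinate `y_L` times a power of `|y + e|`. -/
lemma hasFDerivAt_profile_mul {m : ℕ} (e y : EuclideanSpace ℝ (Fin m)) (hy : y + e ≠ 0) (p : ℝ)
    (L : Fin m) {g : ℝ → ℝ} {g' : ℝ} (hg : HasDerivAt g g' (y L)) :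
    HasFDerivAt (fun z : EuclideanSpace ℝ (Fin m) => g (z L) * ‖z + e‖ ^ p)
      (g (y L) • ((p * ‖y + e‖ ^ (p - 2)) • innerSL ℝ (y + e))
        + (‖y + e‖ ^ p) • (g' • (EuclideanSpace.proj L : EuclideanSpace ℝ (Fin m) →L[ℝ] ℝ))) y :=
  (hg.comp_hasFDerivAt y (EuclideanSpace.proj L : EuclideanSpace ℝ (Fin m) →L[ℝ] ℝ).hasFDerivAt).mul
    (hasFDerivAt_norm_add_rpow e y hy p)

/-- `Δ (c g(y_L) |y + e|^p)` on the half-space `y_L > 0`, when `-e` lies outside it. -/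
lemma laplacian_profile_mul {m : ℕ} (e x : EuclideanSpace ℝ (Fin m)) (p c : ℝ) (L : Fin m)
    (he : 0 ≤ e L) (hx : 0 < x L) {g g' g'' : ℝ → ℝ}
    (hg : ∀ t, 0 < t → HasDerivAt g (g' t) t) (hg' : ∀ t, 0 < t → HasDerivAt g' (g'' t) t) :
    laplacian (fun y => c * g (y L) * ‖y + e‖ ^ p) x =
      c * (g'' (x L) * ‖x + e‖ ^ p + 2 * p * g' (x L) * (x L + e L) * ‖x + e‖ ^ (p - 2)
        + p * (p + m - 2) * g (x L) * ‖x + e‖ ^ (p - 2)) := by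
  have hne : ∀ y : EuclideanSpace ℝ (Fin m), 0 < y L → y + e ≠ 0 := by
    intro y hy h
    have h0 : (y + e) L = 0 := by rw [h]; rfl
    rw [PiLp.add_apply] at h0
    linarith
  have hopen : ∀ᶠ y in nhds x, 0 < y L :=
    (EuclideanSpace.proj L : EuclideanSpace ℝ (Fin m) →L[ℝ] ℝ).continuous.continuousAt.eventually
      (lt_mem_nhds hx)
  have hfirst : ∀ i : Fin m, (fun y => fderiv ℝ (fun y => c * g (y L) * ‖y + e‖ ^ p) y
      (EuclideanSpace.single i 1)) =ᶠ[nhds x] fun y =>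
        (c * p * (y i + e i)) * (g (y L) * ‖y + e‖ ^ (p - 2))
        + c * (EuclideanSpace.single i (1 : ℝ)) L * (g' (y L) * ‖y + e‖ ^ p) := by
    intro i
    filter_upwards [hopen] with y hy
    have h := hasFDerivAt_profile_mul e y (hne y hy) p L ((hg _ hy).const_mul c)
    rw [h.fderiv]
    simp only [add_apply, smul_apply, innerSL_single,
      smul_eq_mul, proj_apply_coord, PiLp.add_apply]
    ring
  have hsecond : ∀ i : Fin m, fderiv ℝ (fun y => fderiv ℝ (fun y => c * g (y L) * ‖y + e‖ ^ p) y
      (EuclideanSpace.single i 1)) x (EuclideanSpace.single i 1) =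
        c * p * g (x L) * ‖x + e‖ ^ (p - 2)
        + c * p * (p - 2) * g (x L) * ‖x + e‖ ^ (p - 2 - 2) * (x i + e i) ^ 2
        + (EuclideanSpace.single i (1 : ℝ)) L
          * (c * p * (x i + e i) * (g' (x L) * ‖x + e‖ ^ (p - 2)) * 2)
        + (EuclideanSpace.single i (1 : ℝ)) L * ((EuclideanSpace.single i (1 : ℝ)) L
          * (c * g'' (x L) * ‖x + e‖ ^ p)) := by
    intro i
    rw [(hfirst i).fderiv_eq]
    have hA := hasFDerivAt_profile_mul e x (hne x hx) (p - 2) L (hg _ hx)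
    have hB := hasFDerivAt_profile_mul e x (hne x hx) p L (hg' _ hx)
    have hC : HasFDerivAt (fun y : EuclideanSpace ℝ (Fin m) => c * p * (y i + e i)) _ x :=
      (((EuclideanSpace.proj i : EuclideanSpace ℝ (Fin m) →L[ℝ] ℝ).hasFDerivAt).add_const
        (e i)).const_mul (c * p)
    have h := (hC.mul hA).add (hB.const_mul (c * (EuclideanSpace.single i (1 : ℝ)) L))
    refine (congrArg (fun φ => φ (EuclideanSpace.single i 1)) h.fderiv).trans ?_
    simp only [add_apply, smul_apply, innerSL_single,
      smul_eq_mul, proj_apply_coord, PiLp.add_apply]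
    rw [show (EuclideanSpace.single i (1 : ℝ)) i = (1 : ℝ) by simp]
    ring
  have hpos : 0 < ‖x + e‖ := norm_pos_iff.2 (hne x hx)
  have hnorm : ‖x + e‖ ^ (p - 2 - 2) * ∑ i, (x i + e i) ^ 2 = ‖x + e‖ ^ (p - 2) := by
    have hs : ∑ i, (x i + e i) ^ 2 = ‖x + e‖ ^ (2 : ℝ) := by
      rw [Real.rpow_two, EuclideanSpace.real_norm_sq_eq]
      simp
    rw [hs, ← Real.rpow_add hpos]
    ring_nf
  -- The vector `single i 1` evaluated at `L` is the Kronecker delta.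
  have hδ : ∀ F : Fin m → ℝ, ∑ i, (EuclideanSpace.single i (1 : ℝ)) L * F i = F L := by
    intro F
    simp
  unfold laplacian
  simp only [hsecond, Finset.sum_add_distrib, hδ, ← Finset.mul_sum]
  rw [mul_assoc _ (‖x + e‖ ^ (p - 2 - 2)), hnorm]
  simp
  ring

/-- For `v(x) = (1/(2(n+2))) [½x_{n+4}² − x_{n+4} + log(1+x_{n+4})] |x+e_{n+4}|^{−n−2}`
one has `−Δv ≤ x_{n+4}² |x+e_{n+4}|^{−n−4}` in `ℝ^{n+4}₊`. -/
theorem v1_subsolution (n : ℕ) (hn : 1 ≤ n)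
    (x : EuclideanSpace ℝ (Fin (n + 4))) (hx : 0 < x ⟨n + 3, by omega⟩) :
    -laplacian
        (fun y : EuclideanSpace ℝ (Fin (n + 4)) =>
          1 / (2 * ((n : ℝ) + 2))
            * ((1 / 2) * (y ⟨n + 3, by omega⟩) ^ 2 - y ⟨n + 3, by omega⟩
                + Real.log (1 + y ⟨n + 3, by omega⟩))
            * ‖y + EuclideanSpace.single (⟨n + 3, by omega⟩ : Fin (n + 4)) (1 : ℝ)‖
                ^ (-(n : ℝ) - 2)) x
      ≤ (x ⟨n + 3, by omega⟩) ^ 2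
          * ‖x + EuclideanSpace.single (⟨n + 3, by omega⟩ : Fin (n + 4)) (1 : ℝ)‖
              ^ (-(n : ℝ) - 4) := by
  set L : Fin (n + 4) := ⟨n + 3, by omega⟩ with hL
  set e : EuclideanSpace ℝ (Fin (n + 4)) := EuclideanSpace.single L (1 : ℝ) with he
  have heL : e L = 1 := by simp [he]
  have hg : ∀ t : ℝ, 0 < t → HasDerivAt
      (fun t : ℝ => (1 / 2) * t ^ 2 - t + Real.log (1 + t)) (t - 1 + 1 / (1 + t)) t := by
    intro t ht
    have h := ((((hasDerivAt_id t).pow 2).const_mul (1 / 2 : ℝ)).sub (hasDerivAt_id t)).add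
      (((hasDerivAt_id t).const_add 1).log (by simp; positivity))
    refine h.congr_deriv ?_
    simp
  have hg' : ∀ t : ℝ, 0 < t → HasDerivAt
      (fun t : ℝ => t - 1 + 1 / (1 + t)) (1 - 1 / (1 + t) ^ 2) t := by
    intro t ht
    have h := ((hasDerivAt_id t).sub_const 1).add
      ((hasDerivAt_const t (1 : ℝ)).div ((hasDerivAt_id t).const_add 1) (by simp; positivity))
    refine h.congr_deriv ?_
    simp
    ring
  rw [laplacian_profile_mul e x (-(n : ℝ) - 2) (1 / (2 * ((n : ℝ) + 2))) L (by simp [heL]) hx hg hg',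
    heL]
  have hr : 0 ≤ ‖x + e‖ ^ (-(n : ℝ) - 2) := Real.rpow_nonneg (norm_nonneg _) _
  rw [show -(n : ℝ) - 2 - 2 = -(n : ℝ) - 4 by ring]
  generalize ‖x + e‖ ^ (-(n : ℝ) - 2) = A at hr ⊢
  generalize ‖x + e‖ ^ (-(n : ℝ) - 4) = B
  generalize x L = t at hx ⊢
  have hg'' : 0 ≤ 1 - 1 / (1 + t) ^ 2 := by
    rw [sub_nonneg, div_le_one (by positivity)]
    nlinarith
  have hmain : 0 ≤ 1 / (2 * ((n : ℝ) + 2)) * ((1 - 1 / (1 + t) ^ 2) * A) := by positivity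
  have ht : (t - 1 + 1 / (1 + t)) * (t + 1) = t ^ 2 := by
    field_simp
    ring
  have hc : 1 / (2 * ((n : ℝ) + 2)) * (2 * (-(n : ℝ) - 2)) = -1 := by
    field_simp
    ring
  push_cast
  linear_combination hmain - t ^ 2 * B * hc
    - 1 / (2 * ((n : ℝ) + 2)) * (2 * (-(n : ℝ) - 2)) * B * ht
end

section
/- Let n ≥ 1 be an integer. Suppose ṽ : {x ∈ ℝ^{n+4} : x_{n+4} ≥ 0} → ℝ is continuous, twice continuously differentiable on the open half-space ℝ^{n+4}₊, satisfies −Δṽ(x) = x_{n+4}²·|x + e_{n+4}|^{−n−4} for all x ∈ ℝ^{n+4}₊, ṽ(x) = 0 whenever x_{n+4} = 0, and ṽ(x) → 0 as |x| → ∞. Then ṽ(x) ≥ (1/(2(n+2))) · [ (1/2)x_{n+4}² − x_{n+4} + log(1 + x_{n+4}) ] · |x + e_{n+4}|^{−n−2} ≥ 0 for every x with x_{n+4} ≥ 0. -/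
/-!
The proof compares `v` with the barrier `w = c f(t) r^{-n-2}`, where `t` is the last coordinate,
`r = |x + e|`, `c = 1/(2(n+2))` and `f(t) = t²/2 - t + log (1 + t)`. Since `r^{-n-2}` is harmonic
in dimension `n + 4` and `f'(t) (1 + t) = t²`, one finds
`Δw = c f''(t) r^{-n-2} - t² r^{-n-4}`, and `f'' > 0` for `t > 0`, so `Δ(v - w) < 0` in the open
half-space (`sum_second_deriv`). The function `v - w` vanishes on the boundary and tends to `0` at
infinity (`barrier_le`, which uses `n ≥ 1`), so if it were negative somewhere it would attain a
negative minimum at an interior point. There every pure second derivative is nonnegative, which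
contradicts `Δ(v - w) < 0` (`laplacian_gt_of_isLocalMin`). As the inequality for the Laplacian is
strict, no perturbation is needed.
-/

open Set

/-! ### Second derivatives at a minimum -/

open Filter Topology in
/-- The second-order necessary condition at an interior minimum. -/
lemma second_deriv_nonneg {φ φ' : ℝ → ℝ} {d : ℝ} (h : IsLocalMin φ 0)
    (h1 : ∀ᶠ s in 𝓝 (0 : ℝ), HasDerivAt φ (φ' s) s) (h2 : HasDerivAt φ' d 0) : 0 ≤ d := by
  by_contra! hd
  have e1 : deriv φ =ᶠ[𝓝 0] φ' := h1.mono fun s hs => hs.deriv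
  have e2 : deriv (deriv φ) 0 = d := by rw [e1.deriv_eq]; exact h2.deriv
  -- A negative second derivative makes `0` a local maximum too, so `φ` is locally constant.
  have hmax : IsLocalMax φ 0 :=
    isLocalMax_of_deriv_deriv_neg (by rw [e2]; exact hd) h.deriv_eq_zero
      h1.self_of_nhds.continuousAt
  have e3 : φ =ᶠ[𝓝 0] fun _ => φ 0 := by
    filter_upwards [h, hmax] with s hs hs' using le_antisymm hs' hs
  have e4 : deriv (deriv φ) 0 = 0 := by
    rw [e3.deriv.deriv_eq]; simp
  linarith

/-! ### The profile and its derivatives along coordinate lines -/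

/-- The profile `f(t) = t²/2 - t + log (1 + t)`, the primitive of `t²/(1+t)` vanishing at `0`. -/
noncomputable def profile (t : ℝ) : ℝ := (1 / 2) * t ^ 2 - t + Real.log (1 + t)

lemma profile_nonneg {t : ℝ} (ht : 0 ≤ t) : 0 ≤ profile t := by
  have h := Real.le_log_one_add_of_nonneg ht
  have h2 : t - t ^ 2 / 2 ≤ 2 * t / (t + 2) := by
    rw [le_div_iff₀ (by linarith)]
    nlinarith [pow_nonneg ht 3]
  unfold profile; linarith

lemma profile_le {t : ℝ} (ht : 0 ≤ t) : profile t ≤ t ^ 2 := by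
  have h := Real.log_le_sub_one_of_pos (show 0 < 1 + t by linarith)
  unfold profile; nlinarith [sq_nonneg t]

lemma hasDerivAt_profile {t : ℝ} (ht : 0 < 1 + t) :
    HasDerivAt profile (t - 1 + (1 + t)⁻¹) t := by
  have h1 := ((hasDerivAt_id t).const_add 1).log ht.ne'
  have h2 := (((hasDerivAt_id t).pow 2).const_mul (1 / 2)).sub (hasDerivAt_id t)
  refine (h2.add h1).congr_deriv ?_
  simp

lemma hasDerivAt_profile' {t : ℝ} (ht : 0 < 1 + t) :
    HasDerivAt (fun t : ℝ => t - 1 + (1 + t)⁻¹) (1 - ((1 + t) ^ 2)⁻¹) t := by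
  have h1 := ((hasDerivAt_id t).const_add 1).inv ht.ne'
  refine (((hasDerivAt_id t).sub_const 1).add h1).congr_deriv ?_
  simp only [id]
  field_simp
  ring

/-- First derivative of the barrier along a coordinate line: `δ` is the rate of change of `t`,
`q` the squared distance to the pole at `s = 0`, and `a` the coordinate of the displacement. -/
lemma hasDerivAt_line {t δ q a p s : ℝ} (ht : 0 < 1 + (t + δ * s))
    (hq : 0 < q + 2 * s * a + s ^ 2) :
    HasDerivAt (fun s : ℝ => profile (t + δ * s) * (q + 2 * s * a + s ^ 2) ^ (-p))
      ((t + δ * s - 1 + (1 + (t + δ * s))⁻¹) * δ * (q + 2 * s * a + s ^ 2) ^ (-p)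
        + profile (t + δ * s) * ((2 * a + 2 * s) * (-p) * (q + 2 * s * a + s ^ 2) ^ (-p - 1))) s := by
  have hl : HasDerivAt (fun s : ℝ => t + δ * s) δ s := by
    simpa using ((hasDerivAt_id s).const_mul δ).const_add t
  have hQ : HasDerivAt (fun s : ℝ => q + 2 * s * a + s ^ 2) (2 * a + 2 * s) s := by
    have := ((((hasDerivAt_id s).const_mul 2).mul_const a).const_add q).add ((hasDerivAt_id s).pow 2)
    refine this.congr_deriv ?_
    simp
  exact ((hasDerivAt_profile ht).comp s hl).mul (hQ.rpow_const (Or.inl hq.ne'))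

/-- Second derivative at `s = 0` of the barrier along a coordinate line. -/
lemma hasDerivAt_line' {t δ q a p : ℝ} (ht : 0 < 1 + t) (hq : 0 < q) :
    HasDerivAt (fun s : ℝ =>
      ((t + δ * s - 1 + (1 + (t + δ * s))⁻¹) * δ * (q + 2 * s * a + s ^ 2) ^ (-p)
        + profile (t + δ * s) * ((2 * a + 2 * s) * (-p) * (q + 2 * s * a + s ^ 2) ^ (-p - 1))))
      ((1 - ((1 + t) ^ 2)⁻¹) * q ^ (-p) * δ ^ 2
        - 4 * p * (t - 1 + (1 + t)⁻¹) * q ^ (-p - 1) * (δ * a)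
        + profile t * (-2 * p * q ^ (-p - 1) + 4 * p * (p + 1) * q ^ (-p - 2) * a ^ 2)) 0 := by
  have ht0 : 0 < 1 + (t + δ * 0) := by simpa using ht
  have hl : HasDerivAt (fun s : ℝ => t + δ * s) δ 0 := by
    simpa using ((hasDerivAt_id (0 : ℝ)).const_mul δ).const_add t
  have hQ : HasDerivAt (fun s : ℝ => q + 2 * s * a + s ^ 2) (2 * a) 0 := by
    have := ((((hasDerivAt_id (0 : ℝ)).const_mul 2).mul_const a).const_add q).add
      ((hasDerivAt_id (0 : ℝ)).pow 2)
    refine this.congr_deriv ?_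
    simp
  have hA : HasDerivAt (fun s : ℝ => (2 * a + 2 * s) * (-p)) (2 * (-p)) 0 := by
    refine ((((hasDerivAt_id (0 : ℝ)).const_mul 2).const_add (2 * a)).mul_const (-p)).congr_deriv ?_
    simp
  have hq0 : q + 2 * 0 * a + 0 ^ 2 ≠ 0 := by simpa using hq.ne'
  have h1 := (((hasDerivAt_profile' ht0).comp 0 hl).mul_const δ).mul
    (hQ.rpow_const (p := -p) (Or.inl hq0))
  have h2 := ((hasDerivAt_profile ht0).comp 0 hl).mul
    (hA.mul (hQ.rpow_const (p := -p - 1) (Or.inl hq0)))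
  refine (h1.add h2).congr_deriv ?_
  simp only [mul_zero, add_zero, zero_mul, Function.comp, Pi.mul_apply, ne_eq, OfNat.ofNat_ne_zero,
    not_false_eq_true, zero_pow, show -p - 1 - 1 = -p - 2 by ring]
  ring

/-! ### The barrier -/

/-- The barrier without its constant: `f(x_k) |x + e_k|^{-n-2}` in dimension `n + 4`. -/
noncomputable def barrier (n : ℕ) (k : Fin (n + 4)) (x : EuclideanSpace ℝ (Fin (n + 4))) : ℝ :=
  profile (x k) * ‖x + EuclideanSpace.single k (1 : ℝ)‖ ^ (-(n : ℝ) - 2)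

section
variable {n : ℕ} {k : Fin (n + 4)} {x : EuclideanSpace ℝ (Fin (n + 4))}

lemma add_one_le_norm : x k + 1 ≤ ‖x + EuclideanSpace.single k (1 : ℝ)‖ := by
  have h := PiLp.norm_apply_le (x + EuclideanSpace.single k (1 : ℝ)) k
  have h2 : (x + EuclideanSpace.single k (1 : ℝ)) k = x k + 1 := by simp
  rw [h2] at h
  exact (le_abs_self _).trans h

lemma barrier_line (i : Fin (n + 4)) (s : ℝ) :
    barrier n k (x + s • EuclideanSpace.single i (1 : ℝ)) =
      profile (x k + (if k = i then 1 else 0) * s) *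
        (‖x + EuclideanSpace.single k (1 : ℝ)‖ ^ 2
          + 2 * s * (x + EuclideanSpace.single k (1 : ℝ)) i + s ^ 2)
          ^ (-(((n : ℝ) + 2) / 2)) := by
  unfold barrier
  congr 1
  · congr 1
    simp
  · have h : ‖x + EuclideanSpace.single k (1 : ℝ)‖ ^ 2
          + 2 * s * (x + EuclideanSpace.single k (1 : ℝ)) i + s ^ 2
        = ‖x + s • EuclideanSpace.single i (1 : ℝ) + EuclideanSpace.single k (1 : ℝ)‖ ^ 2 := by
      rw [show x + s • EuclideanSpace.single i (1 : ℝ) + EuclideanSpace.single k (1 : ℝ)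
        = (x + EuclideanSpace.single k (1 : ℝ)) + s • EuclideanSpace.single i (1 : ℝ) by abel,
        norm_add_sq_real (x + EuclideanSpace.single k (1 : ℝ)), inner_smul_right,
        EuclideanSpace.inner_single_right, norm_smul, PiLp.norm_single]
      simp
      ring
    rw [h, ← Real.rpow_natCast, ← Real.rpow_mul (norm_nonneg _)]
    congr 1
    push_cast
    ring

/-- Decay of the barrier: since `f(t) ≤ t² ≤ r²` and `n ≥ 1`, it is at most `1/r`,
where `r = |x + e_k|`. -/
lemma barrier_le (hn : 1 ≤ n) (hx : 0 ≤ x k) :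
    barrier n k x ≤ ‖x + EuclideanSpace.single k (1 : ℝ)‖⁻¹ := by
  have h1 := add_one_le_norm (x := x) (k := k)
  unfold barrier
  set r := ‖x + EuclideanSpace.single k (1 : ℝ)‖
  have hr : 1 ≤ r := by linarith
  have hr0 : 0 < r := by linarith
  have h2 : profile (x k) ≤ r ^ 2 := (profile_le hx).trans (by gcongr; linarith)
  calc _ ≤ r ^ 2 * r ^ (-(n : ℝ) - 2) := by gcongr
    _ = r ^ (-(n : ℝ)) := by
        rw [← Real.rpow_natCast, ← Real.rpow_add hr0]; congr 1; push_cast; ring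
    _ ≤ r ^ (-1 : ℝ) := by
        apply Real.rpow_le_rpow_of_exponent_le hr
        have : (1 : ℝ) ≤ n := by exact_mod_cast hn
        linarith
    _ = r⁻¹ := Real.rpow_neg_one r

lemma continuousOn_barrier :
    ContinuousOn (barrier n k) {x : EuclideanSpace ℝ (Fin (n + 4)) | 0 ≤ x k} := by
  have hc : Continuous fun x : EuclideanSpace ℝ (Fin (n + 4)) => x k := by fun_prop
  unfold barrier profile
  refine ContinuousOn.mul ?_ ?_
  · refine ContinuousOn.add (by fun_prop) (ContinuousOn.log (by fun_prop) ?_)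
    intro x hx
    have : 0 ≤ x k := hx
    positivity
  · refine ContinuousOn.rpow_const (by fun_prop) fun x hx => Or.inl ?_
    have : 0 ≤ x k := hx
    have := add_one_le_norm (x := x) (k := k)
    linarith

/-- The pure second derivatives of the barrier sum to
`f''(t) r^{-n-2} - 2 (n+2) t² r^{-n-4}`: the power `r^{-n-2}` is harmonic in dimension `n + 4`,
and `f'(t) (1 + t) = t²`. The value is written with `p = (n+2)/2` and `q = r²`. -/
lemma sum_second_deriv (hx : 0 < x k) (p q : ℝ) (hp : p = ((n : ℝ) + 2) / 2)
    (hq : q = ‖x + EuclideanSpace.single k (1 : ℝ)‖ ^ 2) (hq0 : 0 < q) :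
    ∑ i, ((1 - ((1 + x k) ^ 2)⁻¹) * q ^ (-p) * (if k = i then 1 else 0) ^ 2
        - 4 * p * (x k - 1 + (1 + x k)⁻¹) * q ^ (-p - 1)
          * ((if k = i then 1 else 0) * (x + EuclideanSpace.single k (1 : ℝ)) i)
        + profile (x k) * (-2 * p * q ^ (-p - 1)
          + 4 * p * (p + 1) * q ^ (-p - 2) * (x + EuclideanSpace.single k (1 : ℝ)) i ^ 2))
      = (1 - ((1 + x k) ^ 2)⁻¹) * q ^ (-p) - 4 * p * x k ^ 2 * q ^ (-p - 1) := by
  have hs : ∑ i, (x + EuclideanSpace.single k (1 : ℝ)) i ^ 2 = q := by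
    rw [hq, EuclideanSpace.real_norm_sq_eq]
  have hpw : q ^ (-p - 1) = q ^ (-p - 2) * q := by
    rw [← Real.rpow_add_one hq0.ne']; congr 1; ring
  have h1 : (x + EuclideanSpace.single k (1 : ℝ)) k = x k + 1 := by simp
  rw [Finset.sum_add_distrib, Finset.sum_sub_distrib, ← Finset.mul_sum, ← Finset.mul_sum,
    ← Finset.mul_sum, Finset.sum_add_distrib,
    ← Finset.mul_sum (f := fun i => (x + EuclideanSpace.single k (1 : ℝ)) i ^ 2), hs]
  simp only [ite_pow, one_pow, ne_eq, OfNat.ofNat_ne_zero, not_false_eq_true, zero_pow, ite_mul,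
    one_mul, zero_mul, Finset.sum_ite_eq, Finset.mem_univ, if_true, h1, Finset.sum_const,
    Finset.card_univ, Fintype.card_fin, nsmul_eq_mul]
  rw [hpw, hp]
  have : 1 + x k ≠ 0 := by positivity
  push_cast
  field_simp
  ring

/-! ### Comparison of Laplacians -/

open Filter Topology in
/-- At an interior local minimum of `v - c·barrier` with `c > 0`, the Laplacian of `v` strictly
exceeds `-2c(n+2) x_k² r^{-n-4}`, because `f'' > 0`. -/
lemma laplacian_gt_of_isLocalMin {v : EuclideanSpace ℝ (Fin (n + 4)) → ℝ} {c : ℝ} (hc : 0 < c)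
    (hx : 0 < x k) (hv : ContDiffAt ℝ 2 v x)
    (hmin : IsLocalMin (fun y => v y - c * barrier n k y) x) :
    -(2 * c * ((n : ℝ) + 2) *
      (x k ^ 2 * ‖x + EuclideanSpace.single k (1 : ℝ)‖ ^ (-(n : ℝ) - 4))) < laplacian v x := by
  have hr : 0 < ‖x + EuclideanSpace.single k (1 : ℝ)‖ := by
    linarith [add_one_le_norm (x := x) (k := k)]
  obtain ⟨p, hp⟩ : ∃ p, p = ((n : ℝ) + 2) / 2 := ⟨_, rfl⟩
  obtain ⟨q, hq⟩ : ∃ q, q = ‖x + EuclideanSpace.single k (1 : ℝ)‖ ^ 2 := ⟨_, rfl⟩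
  have hq0 : 0 < q := by rw [hq]; positivity
  have hsum := sum_second_deriv hx p q hp hq hq0
  have hpos : 0 < (1 - ((1 + x k) ^ 2)⁻¹) * q ^ (-p) := by
    refine mul_pos (sub_pos.2 (inv_lt_one_of_one_lt₀ ?_)) (Real.rpow_pos_of_pos hq0 _)
    nlinarith
  have hpow : ‖x + EuclideanSpace.single k (1 : ℝ)‖ ^ (-(n : ℝ) - 4) = q ^ (-p - 1) := by
    rw [hq, ← Real.rpow_natCast, ← Real.rpow_mul hr.le, hp]
    congr 1
    push_cast
    ring
  have hdiff : ∀ᶠ y in 𝓝 x, DifferentiableAt ℝ v y :=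
    (hv.eventually (by simp)).mono fun y hy => hy.differentiableAt (by simp)
  have hfd : DifferentiableAt ℝ (fderiv ℝ v) x :=
    (hv.fderiv_right (m := 1) (by norm_num)).differentiableAt (by simp)
  have hle : c * ((1 - ((1 + x k) ^ 2)⁻¹) * q ^ (-p) - 4 * p * x k ^ 2 * q ^ (-p - 1))
      ≤ laplacian v x := by
    rw [← hsum, Finset.mul_sum]
    refine Finset.sum_le_sum fun i _ => ?_
    -- The one-variable condition is applied on the line `s ↦ x + s e_i`.
    have hline : ∀ s : ℝ, HasDerivAt (fun s : ℝ => x + s • EuclideanSpace.single i (1 : ℝ))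
        (EuclideanSpace.single i (1 : ℝ)) s := fun s => by
      simpa using ((hasDerivAt_id s).smul_const (EuclideanSpace.single i (1 : ℝ))).const_add x
    have hx0 : x + (0 : ℝ) • EuclideanSpace.single i (1 : ℝ) = x := by simp
    have hcont : Tendsto (fun s : ℝ => x + s • EuclideanSpace.single i (1 : ℝ)) (𝓝 0) (𝓝 x) := by
      have := (hline 0).continuousAt.tendsto
      rwa [hx0] at this
    rw [← sub_nonneg]
    refine second_deriv_nonneg
      (φ := fun s => v (x + s • EuclideanSpace.single i (1 : ℝ))
        - c * barrier n k (x + s • EuclideanSpace.single i (1 : ℝ)))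
      (φ' := fun s => fderiv ℝ v (x + s • EuclideanSpace.single i (1 : ℝ))
          (EuclideanSpace.single i (1 : ℝ)) - c * _) ?_ ?_
      (HasDerivAt.sub ?_ ((hasDerivAt_line' (by linarith) hq0).const_mul c))
    · have := hcont.eventually hmin
      simpa [IsLocalMin, IsMinFilter] using this
    · have ev1 : ∀ᶠ s : ℝ in 𝓝 0, 0 < 1 + (x k + (if k = i then 1 else 0) * s) := by
        refine ContinuousAt.eventually_lt (by fun_prop) (by fun_prop) ?_
        simp; linarith
      have ev2 : ∀ᶠ s : ℝ in 𝓝 0,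
          0 < q + 2 * s * (x + EuclideanSpace.single k (1 : ℝ)) i + s ^ 2 := by
        refine ContinuousAt.eventually_lt (by fun_prop) (by fun_prop) ?_
        simpa using hq0
      filter_upwards [hcont.eventually hdiff, ev1, ev2] with s hs h1 h2
      refine HasDerivAt.sub (hs.hasFDerivAt.comp_hasDerivAt s (hline s)) (HasDerivAt.const_mul c ?_)
      simp only [barrier_line, ← hq, ← hp]
      exact hasDerivAt_line h1 h2
    · have hg : DifferentiableAt ℝ (fun y => fderiv ℝ v y (EuclideanSpace.single i (1 : ℝ))) x :=
        hfd.clm_apply (differentiableAt_const _)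
      have hg' := hg.hasFDerivAt
      rw [← hx0] at hg'
      have := hg'.comp_hasDerivAt (0 : ℝ) (hline 0)
      rwa [hx0] at this
  rw [hpow]
  refine lt_of_lt_of_le ?_ hle
  have : 4 * p = 2 * (n + 2) := by rw [hp]; ring
  rw [this]
  nlinarith [mul_pos hc hpos]

end

/-- Lower bound for the solution `ṽ` of `−Δṽ = x_{n+4}²|x+e_{n+4}|^{−n−4}` in `ℝ^{n+4}₊`
with zero boundary values and decay at infinity:
`ṽ(x) ≥ (1/(2(n+2)))[½x_{n+4}² − x_{n+4} + log(1+x_{n+4})] |x+e_{n+4}|^{−n−2} ≥ 0`. -/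
theorem v1_lower_bound (n : ℕ) (hn : 1 ≤ n)
    (v : EuclideanSpace ℝ (Fin (n + 4)) → ℝ)
    (hvcont : ContinuousOn v {x : EuclideanSpace ℝ (Fin (n + 4)) | 0 ≤ x ⟨n + 3, by omega⟩})
    (hvC2 : ContDiffOn ℝ 2 v {x : EuclideanSpace ℝ (Fin (n + 4)) | 0 < x ⟨n + 3, by omega⟩})
    (hpde : ∀ x : EuclideanSpace ℝ (Fin (n + 4)), 0 < x ⟨n + 3, by omega⟩ →
      -laplacian v x
        = (x ⟨n + 3, by omega⟩) ^ 2
            * ‖x + EuclideanSpace.single (⟨n + 3, by omega⟩ : Fin (n + 4)) (1 : ℝ)‖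
                ^ (-(n : ℝ) - 4))
    (hbdry : ∀ x : EuclideanSpace ℝ (Fin (n + 4)), x ⟨n + 3, by omega⟩ = 0 → v x = 0)
    (hdecay : ∀ ε > (0 : ℝ), ∃ R : ℝ, ∀ x : EuclideanSpace ℝ (Fin (n + 4)),
      0 ≤ x ⟨n + 3, by omega⟩ → R ≤ ‖x‖ → |v x| < ε) :
    ∀ x : EuclideanSpace ℝ (Fin (n + 4)), 0 ≤ x ⟨n + 3, by omega⟩ →
      1 / (2 * ((n : ℝ) + 2))
          * ((1 / 2) * (x ⟨n + 3, by omega⟩) ^ 2 - x ⟨n + 3, by omega⟩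
              + Real.log (1 + x ⟨n + 3, by omega⟩))
          * ‖x + EuclideanSpace.single (⟨n + 3, by omega⟩ : Fin (n + 4)) (1 : ℝ)‖
              ^ (-(n : ℝ) - 2) ≤ v x
      ∧ 0 ≤ 1 / (2 * ((n : ℝ) + 2))
          * ((1 / 2) * (x ⟨n + 3, by omega⟩) ^ 2 - x ⟨n + 3, by omega⟩
              + Real.log (1 + x ⟨n + 3, by omega⟩))
          * ‖x + EuclideanSpace.single (⟨n + 3, by omega⟩ : Fin (n + 4)) (1 : ℝ)‖
              ^ (-(n : ℝ) - 2) := by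
  obtain ⟨k, hk⟩ : ∃ k : Fin (n + 4), k = ⟨n + 3, by omega⟩ := ⟨_, rfl⟩
  simp only [← hk] at *
  have hn2 : (0 : ℝ) < (n : ℝ) + 2 := by positivity
  obtain ⟨c, hc⟩ : ∃ c : ℝ, c = 1 / (2 * ((n : ℝ) + 2)) := ⟨_, rfl⟩
  have hc0 : 0 < c := by rw [hc]; positivity
  have hc1 : c ≤ 1 := by
    rw [hc, div_le_one (by positivity)]
    linarith
  rw [← hc]
  have key : ∀ x : EuclideanSpace ℝ (Fin (n + 4)), 0 ≤ x k → 0 ≤ v x - c * barrier n k x := by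
    by_contra! hneg
    obtain ⟨x₁, hx₁, hlt⟩ := hneg
    have hkc : Continuous fun x : EuclideanSpace ℝ (Fin (n + 4)) => x k := by fun_prop
    obtain ⟨ε, hε⟩ : ∃ ε, ε = -(v x₁ - c * barrier n k x₁) / 2 := ⟨_, rfl⟩
    have hε0 : 0 < ε := by rw [hε]; linarith
    obtain ⟨R, hR⟩ := hdecay ε hε0
    -- Decay of `v` and of the barrier forces the negative infimum to be attained.
    obtain ⟨x₀, hx₀, hmin⟩ : ∃ x₀ ∈ {x : EuclideanSpace ℝ (Fin (n + 4)) | 0 ≤ x k},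
        IsMinOn (fun x => v x - c * barrier n k x) {x | 0 ≤ x k} x₀ := by
      refine ContinuousOn.exists_isMinOn' (hvcont.sub (continuousOn_barrier.const_smul c))
        (isClosed_le continuous_const hkc) hx₁ ?_
      have hbig := tendsto_norm_cocompact_atTop (E := EuclideanSpace ℝ (Fin (n + 4)))
      rw [Filter.eventually_inf_principal]
      filter_upwards [hbig.eventually_ge_atTop R, hbig.eventually_ge_atTop (ε⁻¹ + 1)]
        with x h1 h2 hx
      have hvx := abs_lt.1 (hR x hx h1)
      have hnorm : ε⁻¹ ≤ ‖x + EuclideanSpace.single k (1 : ℝ)‖ := by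
        have := norm_sub_le (x + EuclideanSpace.single k (1 : ℝ)) (EuclideanSpace.single k (1 : ℝ))
        rw [add_sub_cancel_right, PiLp.norm_single, norm_one] at this
        linarith
      have hb : barrier n k x ≤ ε :=
        (barrier_le hn hx).trans (inv_le_of_inv_le₀ hε0 hnorm)
      have hcb : c * barrier n k x ≤ ε := by
        nlinarith
      linarith [hvx.1]
    have hx₀lt : v x₀ - c * barrier n k x₀ < 0 := lt_of_le_of_lt (hmin hx₁) hlt
    have hx₀pos : 0 < x₀ k := by
      refine lt_of_le_of_ne hx₀ fun h => ?_
      rw [hbdry x₀ h.symm, barrier, ← h] at hx₀lt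
      simp [profile] at hx₀lt
    have hopen : {x : EuclideanSpace ℝ (Fin (n + 4)) | 0 < x k} ∈ nhds x₀ :=
      (isOpen_lt continuous_const hkc).mem_nhds hx₀pos
    have hloc : IsLocalMin (fun y => v y - c * barrier n k y) x₀ :=
      hmin.isLocalMin (Filter.mem_of_superset hopen fun y (hy : 0 < y k) => hy.le)
    have hlap := laplacian_gt_of_isLocalMin hc0 hx₀pos (hvC2.contDiffAt hopen) hloc
    have h2c : 2 * c * ((n : ℝ) + 2) = 1 := by rw [hc]; field_simp
    have := hpde x₀ hx₀pos
    rw [h2c, one_mul, ← this] at hlap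
    linarith
  intro x hx
  have hkey := key x hx
  refine ⟨?_, ?_⟩
  · rw [barrier, profile] at hkey
    linarith
  · exact mul_nonneg (mul_nonneg hc0.le (profile_nonneg hx)) (Real.rpow_nonneg (norm_nonneg _) _)
end

section
/- Let n ≥ 4 be an integer. Then (1/(4n)) · ∫_{ℝⁿ₊} |x + eₙ|^{−2n−4} · (x₁⁴·xₙ⁴/(1 + xₙ)) dx = 9·ω_{n−2}·B((n−1)/2, (n+1)/2) / (4(n+1)²·n³·(n−1)(n−2)(n−3)). -/
/-!
The integral is computed by Gaussian subordination. Write `n = k + 2` and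
`S = |x + eₙ|² = x₁² + ∑ xᵢ² + (1 + xₙ)²`. Then
`Γ(n + 2) S ^ (-(n + 2)) = ∫₀^∞ s ^ (n + 1) e ^ (-s S) ds`, and for fixed `s` the integrand in `x`
is a product of functions of one coordinate. The coordinate `x₁` gives `∫ y⁴ e ^ (-s y²) dy`, the
`k` middle ones give Gaussian integrals, and the last one stays as an integral over `t = xₙ > 0`
(`lintegral_pi_coord`). Exchanging the `s`- and `t`-integrals and integrating in `s` leaves a
constant times `∫₀^∞ t⁴ (1 + t) ^ (-(n + 2)) dt` (`gamma_mul_lintegral`). This is the beta integral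
`B(5, n - 3)`, obtained in `lintegral_beta` by the same subordination applied to `1 + t`.

All functions involved are nonnegative, so the work is done with the lower Lebesgue integral, where
Tonelli's theorem needs only measurability. The Bochner integral of the statement is recovered at
the end; what remains is the functional equation of `Γ`.
-/

open MeasureTheory Set

/-- The Euler Beta function `B(a,b) = Γ(a)Γ(b)/Γ(a+b)`. -/
noncomputable def realBeta (a b : ℝ) : ℝ :=
  Real.Gamma a * Real.Gamma b / Real.Gamma (a + b)

/-! ### Integrals of products of one-variable functions -/

/-- Tonelli's theorem in `n` variables for a product of functions of one coordinate, the lower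
Lebesgue analogue of `integral_fin_nat_prod_volume_eq_prod`. -/
lemma lintegral_fin_prod {n : ℕ} (f : Fin n → ℝ → ENNReal) (hf : ∀ i, Measurable (f i)) :
    ∫⁻ x : Fin n → ℝ, ∏ i, f i (x i) = ∏ i, ∫⁻ y, f i y := by
  induction n with
  | zero => simp [lintegral_const, volume_pi]
  | succ n ih =>
    rw [← ((volume_preserving_piFinSuccAbove (fun _ : Fin (n + 1) => ℝ) 0).symm).lintegral_comp
      (f := fun x => ∏ i, f i (x i)) (Finset.measurable_fun_prod _ fun i _ =>
        (hf i).comp (measurable_pi_apply i))]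
    simp only [MeasurableEquiv.piFinSuccAbove_symm_apply, Fin.insertNthEquiv, Equiv.coe_fn_mk,
      Fin.insertNth_zero, Fin.prod_univ_succ, Fin.cons_zero, Fin.cons_succ]
    rw [← ih (fun i => f i.succ) fun i => hf _]
    exact lintegral_prod_mul (hf 0).aemeasurable
      (Finset.measurable_fun_prod _ fun (i : Fin n) _ =>
        (hf i.succ).comp (measurable_pi_apply i)).aemeasurable

lemma lintegral_first_middle_last {k : ℕ} (a b c : ℝ → ENNReal) (ha : Measurable a)
    (hb : Measurable b) (hc : Measurable c) :
    ∫⁻ x : Fin (k + 2) → ℝ,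
        a (x 0) * (∏ i : Fin k, b (x i.succ.castSucc)) * c (x (Fin.last (k + 1)))
      = (∫⁻ y, a y) * (∫⁻ y, b y) ^ k * ∫⁻ y, c y := by
  have h := lintegral_fin_prod (n := k + 2)
    (fun i => if i = 0 then a else if i = Fin.last (k + 1) then c else b)
    (fun i => by split_ifs <;> assumption)
  have h1 : ∀ i : Fin k, i.succ.castSucc ≠ (0 : Fin (k + 2)) := fun i => by
    simp [Fin.ext_iff]
  have h2 : ∀ i : Fin k, i.succ.castSucc ≠ Fin.last (k + 1) := fun i => by
    have := i.2
    simp only [ne_eq, Fin.ext_iff, Fin.val_castSucc, Fin.val_succ, Fin.val_last]; omega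
  have h3 : Fin.last (k + 1) ≠ 0 := by simp [Fin.ext_iff]
  simpa only [Fin.prod_univ_castSucc (n := k + 1), Fin.prod_univ_succ (n := k), Fin.castSucc_zero,
    reduceIte, h1, h2, h3, if_false, Finset.prod_const, Finset.card_univ, Fintype.card_fin] using h

/-! ### One-variable gamma, Gaussian and beta integrals -/

lemma lintegral_gamma {a r : ℝ} (ha : 0 < a) (hr : 0 < r) :
    ∫⁻ s in Ioi (0 : ℝ), ENNReal.ofReal (s ^ (a - 1) * Real.exp (-(r * s)))
      = ENNReal.ofReal ((1 / r) ^ a * Real.Gamma a) := by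
  rw [← Real.integral_rpow_mul_exp_neg_mul_Ioi ha hr, ofReal_integral_eq_lintegral_ofReal]
  · have := integrableOn_rpow_mul_exp_neg_mul_rpow (s := a - 1) (p := 1) (b := r) (by linarith)
      one_pos hr
    simpa [IntegrableOn] using this
  · filter_upwards [ae_restrict_mem measurableSet_Ioi] with s hs
    have : 0 < s := hs
    positivity

lemma lintegral_gauss {s : ℝ} (hs : 0 < s) :
    ∫⁻ y : ℝ, ENNReal.ofReal (Real.exp (-(s * y ^ 2))) = ENNReal.ofReal √(Real.pi / s) := by
  rw [← integral_gaussian, ofReal_integral_eq_lintegral_ofReal (integrable_exp_neg_mul_sq hs)]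
  · simp
  · exact .of_forall fun y => (Real.exp_pos _).le

lemma lintegral_gauss_four {s : ℝ} (hs : 0 < s) :
    ∫⁻ y : ℝ, ENNReal.ofReal (y ^ 4 * Real.exp (-(s * y ^ 2)))
      = ENNReal.ofReal (3 / 4 * √Real.pi * s ^ (-(5 / 2) : ℝ)) := by
  have hi : Integrable fun y : ℝ => y ^ 4 * Real.exp (-(s * y ^ 2)) := by
    have := integrable_rpow_mul_exp_neg_mul_sq (s := ((4 : ℕ) : ℝ)) hs (by norm_num)
    simpa only [Real.rpow_natCast, neg_mul] using this
  rw [← ofReal_integral_eq_lintegral_ofReal hi (.of_forall fun y => by positivity)]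
  congr 1
  have h := integral_comp_abs (f := fun y : ℝ => y ^ 4 * Real.exp (-(s * y ^ 2)))
  simp only [sq_abs, (by decide : Even 4).pow_abs] at h
  have h2 := integral_rpow_mul_exp_neg_mul_rpow (p := 2) (q := ((4 : ℕ) : ℝ)) two_pos
    (by norm_num) hs
  have h3 : Real.Gamma (5 / 2) = 3 / 4 * √Real.pi := by
    rw [show (5 / 2 : ℝ) = 1 / 2 + 1 + 1 by norm_num, Real.Gamma_add_one (by norm_num),
      Real.Gamma_add_one (by norm_num), Real.Gamma_one_half_eq]
    ring
  simp only [Real.rpow_natCast, Real.rpow_two, neg_mul] at h2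
  rw [h, h2]
  norm_num [h3]
  ring

/-- The beta integral `∫₀^∞ t⁴ (1 + t) ^ (-m) dt = Γ(5) Γ(m - 5) / Γ(m)`. It follows from
`Γ(m) (1 + t) ^ (-m) = ∫₀^∞ u ^ (m - 1) e ^ (-(1 + t) u) du` and Tonelli's theorem. -/
lemma lintegral_beta {m : ℝ} (hm : 5 < m) :
    ∫⁻ t in Ioi (0 : ℝ), ENNReal.ofReal (t ^ 4 * (1 / (1 + t)) ^ m)
      = ENNReal.ofReal (24 * Real.Gamma (m - 5) / Real.Gamma m) := by
  have hm0 : 0 < Real.Gamma m := Real.Gamma_pos_of_pos (by linarith)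
  have key : ENNReal.ofReal (Real.Gamma m) *
      ∫⁻ t in Ioi (0 : ℝ), ENNReal.ofReal (t ^ 4 * (1 / (1 + t)) ^ m)
      = ENNReal.ofReal (24 * Real.Gamma (m - 5)) := by
    calc _ = ∫⁻ t in Ioi (0 : ℝ), ∫⁻ u in Ioi (0 : ℝ),
          ENNReal.ofReal (t ^ 4 * (u ^ (m - 1) * Real.exp (-((1 + t) * u)))) := by
          rw [← lintegral_const_mul' _ _ ENNReal.ofReal_ne_top]
          refine setLIntegral_congr_fun measurableSet_Ioi fun t ht => ?_
          have ht' : (0 : ℝ) < t := ht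
          simp only [ENNReal.ofReal_mul (pow_nonneg ht'.le 4)]
          rw [lintegral_const_mul' _ _ ENNReal.ofReal_ne_top,
            lintegral_gamma (by linarith) (by linarith), ENNReal.ofReal_mul (by positivity)]
          ring
      _ = ∫⁻ u in Ioi (0 : ℝ), ∫⁻ t in Ioi (0 : ℝ),
          ENNReal.ofReal (t ^ 4 * (u ^ (m - 1) * Real.exp (-((1 + t) * u)))) :=
          lintegral_lintegral_swap (by fun_prop)
      _ = ∫⁻ u in Ioi (0 : ℝ), ENNReal.ofReal 24 *
            ENNReal.ofReal (u ^ (m - 5 - 1) * Real.exp (-(1 * u))) := by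
          refine setLIntegral_congr_fun measurableSet_Ioi fun u hu => ?_
          have hu' : (0 : ℝ) < u := hu
          have h1 : ∀ t : ℝ, ENNReal.ofReal (t ^ 4 * (u ^ (m - 1) * Real.exp (-((1 + t) * u))))
              = ENNReal.ofReal (u ^ (m - 1) * Real.exp (-u)) *
                ENNReal.ofReal (t ^ ((5 : ℝ) - 1) * Real.exp (-(u * t))) := fun t => by
            rw [← ENNReal.ofReal_mul (by positivity)]
            congr 1
            rw [show (5 : ℝ) - 1 = (4 : ℕ) by norm_num, Real.rpow_natCast,
              show -((1 + t) * u) = -u + -(u * t) by ring, Real.exp_add]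
            ring
          simp only [h1]
          rw [lintegral_const_mul' _ _ ENNReal.ofReal_ne_top, lintegral_gamma (by norm_num) hu',
            ← ENNReal.ofReal_mul (by positivity), ← ENNReal.ofReal_mul (by positivity)]
          congr 1
          have h5 : Real.Gamma 5 = 24 := by norm_num [Nat.factorial]
          rw [h5, show m - 5 - 1 = (m - 1) - (5 : ℕ) by push_cast; ring,
            Real.rpow_sub_natCast hu'.ne', show (5 : ℝ) = (5 : ℕ) by norm_num, Real.rpow_natCast]
          simp only [one_mul]
          field_simp
      _ = _ := by
          rw [lintegral_const_mul' _ _ ENNReal.ofReal_ne_top,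
            lintegral_gamma (by linarith) one_pos, ← ENNReal.ofReal_mul (by norm_num)]
          simp
  rw [ENNReal.ofReal_div_of_pos hm0, ← key, mul_comm, ENNReal.mul_div_cancel_right]
  · exact (ENNReal.ofReal_pos.2 hm0).ne'
  · exact ENNReal.ofReal_ne_top

/-! ### Subordination of the half-space integral -/

/-- The factor depending on the last coordinate `t` after subordination,
`t⁴ / (1 + t) * e ^ (-s (1 + t)²)`, extended by `0` to `t ≤ 0`. The cutoff encodes the restriction
to the half-space, so that the integral can be taken over all of `ℝⁿ`. -/
noncomputable def lastIntegrand (s t : ℝ) : ENNReal :=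
  (Ioi (0 : ℝ)).indicator
    (fun t => ENNReal.ofReal (t ^ 4 / (1 + t) * Real.exp (-(s * (1 + t) ^ 2)))) t

/-- For fixed `s`, the integral in `x` factors over the coordinates, and all of them but the last
one can be integrated explicitly. -/
lemma lintegral_pi_coord {k : ℕ} {s : ℝ} (hs : 0 < s) :
    ∫⁻ x : Fin (k + 2) → ℝ,
        ENNReal.ofReal (x 0 ^ 4 * Real.exp (-(s * x 0 ^ 2))) *
          (∏ i : Fin k, ENNReal.ofReal (Real.exp (-(s * x i.succ.castSucc ^ 2)))) *
          lastIntegrand s (x (Fin.last (k + 1)))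
      = ENNReal.ofReal (3 / 4 * Real.pi ^ (((k : ℝ) + 1) / 2) * s ^ (-(((k : ℝ) + 5) / 2))) *
          ∫⁻ t in Ioi (0 : ℝ),
            ENNReal.ofReal (t ^ 4 / (1 + t) * Real.exp (-(s * (1 + t) ^ 2))) := by
  have hm : Measurable (lastIntegrand s) :=
    Measurable.indicator (by fun_prop) measurableSet_Ioi
  rw [lintegral_first_middle_last
    (fun y => ENNReal.ofReal (y ^ 4 * Real.exp (-(s * y ^ 2))))
    (fun y => ENNReal.ofReal (Real.exp (-(s * y ^ 2)))) (lastIntegrand s)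
    (by fun_prop) (by fun_prop) hm, lintegral_gauss_four hs, lintegral_gauss hs,
    ← ENNReal.ofReal_pow (by positivity), ← ENNReal.ofReal_mul (by positivity)]
  congr 1
  · congr 1
    have e1 : √(Real.pi / s) ^ k = Real.pi ^ ((k : ℝ) / 2) * s ^ (-((k : ℝ) / 2)) := by
      rw [Real.sqrt_eq_rpow, ← Real.rpow_mul_natCast (by positivity),
        Real.div_rpow Real.pi_pos.le hs.le, Real.rpow_neg hs.le, div_eq_mul_inv]
      ring_nf
    rw [e1, Real.sqrt_eq_rpow,
      show ((k : ℝ) + 1) / 2 = 1 / 2 + (k : ℝ) / 2 by ring,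
      show -(((k : ℝ) + 5) / 2) = -(5 / 2) + -((k : ℝ) / 2) by ring,
      Real.rpow_add Real.pi_pos, Real.rpow_add hs]
    ring
  · exact lintegral_indicator measurableSet_Ioi _

/-- Pointwise subordination: `Γ(n + 2)` times the integrand, cut off to the half-space, is an
integral over `s` of products of functions of one coordinate (here `n = k + 2`). -/
lemma gamma_mul_integrand {k : ℕ} (x : Fin (k + 2) → ℝ) :
    ENNReal.ofReal (Real.Gamma ((k : ℝ) + 4)) *
      ({x : Fin (k + 2) → ℝ | 0 < x (Fin.last (k + 1))}.indicator (fun x => ENNReal.ofReal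
        ((1 / (x 0 ^ 2 + (∑ i : Fin k, x i.succ.castSucc ^ 2) + (1 + x (Fin.last (k + 1))) ^ 2))
            ^ ((k : ℝ) + 4) *
          (x 0 ^ 4 * x (Fin.last (k + 1)) ^ 4 / (1 + x (Fin.last (k + 1)))))) x)
      = ∫⁻ s in Ioi (0 : ℝ), ENNReal.ofReal (s ^ ((k : ℝ) + 3)) *
          (ENNReal.ofReal (x 0 ^ 4 * Real.exp (-(s * x 0 ^ 2))) *
          (∏ i : Fin k, ENNReal.ofReal (Real.exp (-(s * x i.succ.castSucc ^ 2)))) *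
          lastIntegrand s (x (Fin.last (k + 1)))) := by
  by_cases hx : 0 < x (Fin.last (k + 1))
  · rw [indicator_of_mem (by exact hx)]
    simp only [lastIntegrand, indicator_of_mem (mem_Ioi.2 hx)]
    set t := x (Fin.last (k + 1))
    set S := x 0 ^ 2 + (∑ i : Fin k, x i.succ.castSucc ^ 2) + (1 + t) ^ 2 with hS
    have hSpos : 0 < S := by
      have : 0 ≤ ∑ i : Fin k, x i.succ.castSucc ^ 2 := Finset.sum_nonneg fun i _ => sq_nonneg _
      positivity
    have hG : 0 < Real.Gamma ((k : ℝ) + 4) := Real.Gamma_pos_of_pos (by positivity)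
    trans ∫⁻ s in Ioi (0 : ℝ), ENNReal.ofReal (x 0 ^ 4 * t ^ 4 / (1 + t)) *
        ENNReal.ofReal (s ^ ((k : ℝ) + 4 - 1) * Real.exp (-(S * s)))
    · rw [lintegral_const_mul' _ _ ENNReal.ofReal_ne_top, lintegral_gamma (by positivity) hSpos,
        ← ENNReal.ofReal_mul hG.le, ← ENNReal.ofReal_mul (by positivity)]
      congr 1
      ring
    · refine setLIntegral_congr_fun measurableSet_Ioi fun s hs => ?_
      have hs' : (0 : ℝ) < s := hs
      rw [← ENNReal.ofReal_prod_of_nonneg fun i _ => (Real.exp_pos _).le, ← Real.exp_sum,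
        ← ENNReal.ofReal_mul (by positivity), ← ENNReal.ofReal_mul (by positivity),
        ← ENNReal.ofReal_mul (by positivity), ← ENNReal.ofReal_mul (by positivity)]
      congr 1
      rw [Finset.sum_neg_distrib, ← Finset.mul_sum, hS,
        show -((x 0 ^ 2 + (∑ i : Fin k, x i.succ.castSucc ^ 2) + (1 + t) ^ 2) * s)
          = -(s * x 0 ^ 2) + -(s * ∑ i : Fin k, x i.succ.castSucc ^ 2) + -(s * (1 + t) ^ 2) by ring,
        Real.exp_add, Real.exp_add, show (k : ℝ) + 4 - 1 = k + 3 by ring]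
      ring
  · rw [indicator_of_notMem (by exact hx)]
    simp [lastIntegrand, hx]

/-- Reduction of the `n`-dimensional integral to a beta integral in the last coordinate. -/
lemma gamma_mul_lintegral (k : ℕ) :
    ENNReal.ofReal (Real.Gamma ((k : ℝ) + 4)) *
      ∫⁻ x in {x : Fin (k + 2) → ℝ | 0 < x (Fin.last (k + 1))}, ENNReal.ofReal
        ((1 / (x 0 ^ 2 + (∑ i : Fin k, x i.succ.castSucc ^ 2) + (1 + x (Fin.last (k + 1))) ^ 2))
            ^ ((k : ℝ) + 4) *
          (x 0 ^ 4 * x (Fin.last (k + 1)) ^ 4 / (1 + x (Fin.last (k + 1)))))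
      = ENNReal.ofReal (3 / 4 * Real.pi ^ (((k : ℝ) + 1) / 2) * Real.Gamma (((k : ℝ) + 3) / 2)) *
        ∫⁻ t in Ioi (0 : ℝ), ENNReal.ofReal (t ^ 4 * (1 / (1 + t)) ^ ((k : ℝ) + 4)) := by
  have hset : MeasurableSet {x : Fin (k + 2) → ℝ | 0 < x (Fin.last (k + 1))} :=
    measurableSet_lt measurable_const (measurable_pi_apply _)
  have hL : Measurable fun p : (Fin (k + 2) → ℝ) × ℝ =>
      lastIntegrand p.2 (p.1 (Fin.last (k + 1))) := by
    have : (fun p : (Fin (k + 2) → ℝ) × ℝ => lastIntegrand p.2 (p.1 (Fin.last (k + 1))))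
        = {p : (Fin (k + 2) → ℝ) × ℝ | 0 < p.1 (Fin.last (k + 1))}.indicator fun p =>
          ENNReal.ofReal (p.1 (Fin.last (k + 1)) ^ 4 / (1 + p.1 (Fin.last (k + 1))) *
            Real.exp (-(p.2 * (1 + p.1 (Fin.last (k + 1))) ^ 2))) := rfl
    rw [this]
    exact Measurable.indicator (by fun_prop) (measurableSet_lt measurable_const (by fun_prop))
  rw [← lintegral_indicator hset, ← lintegral_const_mul' _ _ ENNReal.ofReal_ne_top]
  simp only [gamma_mul_integrand]
  -- `hL` is found by `fun_prop` in the local context, for the joint measurability in `(x, s)`.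
  rw [lintegral_lintegral_swap (by fun_prop)]
  calc _ = ∫⁻ s in Ioi (0 : ℝ), ∫⁻ t in Ioi (0 : ℝ),
        ENNReal.ofReal (3 / 4 * Real.pi ^ (((k : ℝ) + 1) / 2) * (t ^ 4 / (1 + t)) *
          (s ^ (((k : ℝ) + 3) / 2 - 1) * Real.exp (-((1 + t) ^ 2 * s)))) := by
        refine setLIntegral_congr_fun measurableSet_Ioi fun s hs => ?_
        have hs' : (0 : ℝ) < s := hs
        rw [lintegral_const_mul' _ _ ENNReal.ofReal_ne_top, lintegral_pi_coord hs', ← mul_assoc,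
          ← ENNReal.ofReal_mul (by positivity), ← lintegral_const_mul' _ _ ENNReal.ofReal_ne_top]
        refine lintegral_congr fun t => ?_
        rw [← ENNReal.ofReal_mul (by positivity)]
        congr 1
        rw [show ((k : ℝ) + 3) / 2 - 1 = (k + 3) + -(((k : ℝ) + 5) / 2) by ring,
          Real.rpow_add hs' ((k : ℝ) + 3), mul_comm ((1 + t) ^ 2) s]
        ring
    _ = ∫⁻ t in Ioi (0 : ℝ), ∫⁻ s in Ioi (0 : ℝ),
        ENNReal.ofReal (3 / 4 * Real.pi ^ (((k : ℝ) + 1) / 2) * (t ^ 4 / (1 + t)) *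
          (s ^ (((k : ℝ) + 3) / 2 - 1) * Real.exp (-((1 + t) ^ 2 * s)))) :=
        lintegral_lintegral_swap (by fun_prop)
    _ = _ := by
        rw [← lintegral_const_mul' _ _ ENNReal.ofReal_ne_top]
        refine setLIntegral_congr_fun measurableSet_Ioi fun t ht => ?_
        have ht' : (0 : ℝ) < t := ht
        have hc : 0 ≤ 3 / 4 * Real.pi ^ (((k : ℝ) + 1) / 2) * (t ^ 4 / (1 + t)) := by positivity
        have hG : 0 < Real.Gamma (((k : ℝ) + 3) / 2) := Real.Gamma_pos_of_pos (by positivity)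
        simp only [ENNReal.ofReal_mul hc]
        rw [lintegral_const_mul' _ _ ENNReal.ofReal_ne_top,
          lintegral_gamma (by positivity) (by positivity), ← ENNReal.ofReal_mul (by positivity),
          ← ENNReal.ofReal_mul (by positivity)]
        congr 1
        have e : (1 / (1 + t) ^ 2) ^ (((k : ℝ) + 3) / 2) = (1 / (1 + t)) ^ ((k : ℝ) + 3) := by
          rw [show 1 / (1 + t) ^ 2 = (1 / (1 + t)) ^ (2 : ℝ) by
              rw [Real.rpow_two, one_div_pow],
            ← Real.rpow_mul (by positivity)]
          ring_nf
        rw [e, show (k : ℝ) + 4 = k + 3 + 1 by ring, Real.rpow_add_one (by positivity)]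
        ring

/-! ### Evaluation in terms of gamma values -/

lemma lintegral_value {k : ℕ} (hk : 2 ≤ k) :
    ∫⁻ x in {x : Fin (k + 2) → ℝ | 0 < x (Fin.last (k + 1))}, ENNReal.ofReal
        ((1 / (x 0 ^ 2 + (∑ i : Fin k, x i.succ.castSucc ^ 2) + (1 + x (Fin.last (k + 1))) ^ 2))
            ^ ((k : ℝ) + 4) *
          (x 0 ^ 4 * x (Fin.last (k + 1)) ^ 4 / (1 + x (Fin.last (k + 1)))))
      = ENNReal.ofReal (18 * Real.pi ^ (((k : ℝ) + 1) / 2) * Real.Gamma (((k : ℝ) + 3) / 2) *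
          Real.Gamma ((k : ℝ) - 1) / Real.Gamma ((k : ℝ) + 4) ^ 2) := by
  have hk' : (2 : ℝ) ≤ k := by exact_mod_cast hk
  have hG : 0 < Real.Gamma ((k : ℝ) + 4) := Real.Gamma_pos_of_pos (by positivity)
  have hG2 : 0 < Real.Gamma (((k : ℝ) + 3) / 2) := Real.Gamma_pos_of_pos (by positivity)
  have h := gamma_mul_lintegral k
  rw [lintegral_beta (by linarith), ← ENNReal.ofReal_mul (by positivity)] at h
  -- The constant is `3 / 4 * Γ(5) = 3 / 4 * 24 = 18`.
  rw [← ENNReal.mul_right_inj (ENNReal.ofReal_pos.2 hG).ne' ENNReal.ofReal_ne_top, h,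
    ← ENNReal.ofReal_mul hG.le]
  congr 1
  rw [show (k : ℝ) + 4 - 5 = k - 1 by ring]
  field_simp
  ring

/-- `(1/(4n)) ∫_{ℝⁿ₊} |x+eₙ|^{−2n−4} x₁⁴xₙ⁴/(1+xₙ) dx
  = 9 ω_{n−2} B((n−1)/2,(n+1)/2) / (4(n+1)²n³(n−1)(n−2)(n−3))`. -/
theorem first_term_computation (n : ℕ) (hn : 4 ≤ n) :
    (1 / (4 * (n : ℝ))) *
      ∫ x in {x : EuclideanSpace ℝ (Fin n) | 0 < x ⟨n - 1, by omega⟩},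
        ‖x + EuclideanSpace.single (⟨n - 1, by omega⟩ : Fin n) (1 : ℝ)‖
            ^ (-(2 * (n : ℝ) + 4))
          * ((x ⟨0, by omega⟩) ^ 4 * (x ⟨n - 1, by omega⟩) ^ 4 / (1 + x ⟨n - 1, by omega⟩))
      = 9 * sphereVol (n - 2) * realBeta (((n : ℝ) - 1) / 2) (((n : ℝ) + 1) / 2)
          / (4 * ((n : ℝ) + 1) ^ 2 * (n : ℝ) ^ 3 * ((n : ℝ) - 1) * ((n : ℝ) - 2)
              * ((n : ℝ) - 3)) := by
  obtain ⟨k, rfl⟩ : ∃ k, n = k + 2 := ⟨n - 2, by omega⟩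
  have hk : 2 ≤ k := by omega
  have hk' : (2 : ℝ) ≤ k := by exact_mod_cast hk
  have hG : 0 < Real.Gamma ((k : ℝ) - 1) := Real.Gamma_pos_of_pos (by linarith)
  have hG2 : 0 < Real.Gamma (((k : ℝ) + 3) / 2) := Real.Gamma_pos_of_pos (by positivity)
  have hG3 : 0 < Real.Gamma (((k : ℝ) + 1) / 2) := Real.Gamma_pos_of_pos (by positivity)
  -- With `n = k + 2` the two indices of the statement are definitionally `Fin.last` and `0`.
  have hlast : (⟨k + 2 - 1, by omega⟩ : Fin (k + 2)) = Fin.last (k + 1) := rfl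
  have hzero : (⟨0, by omega⟩ : Fin (k + 2)) = 0 := rfl
  simp only [hlast, hzero]
  rw [← (PiLp.volume_preserving_toLp (Fin (k + 2))).setIntegral_preimage_emb
    (MeasurableEquiv.toLp 2 (Fin (k + 2) → ℝ)).measurableEmbedding]
  have hset : MeasurableSet {x : Fin (k + 2) → ℝ | 0 < x (Fin.last (k + 1))} :=
    measurableSet_lt measurable_const (measurable_pi_apply _)
  have hint : ∫ x in {x : Fin (k + 2) → ℝ | 0 < x (Fin.last (k + 1))},
        ((1 / (x 0 ^ 2 + (∑ i : Fin k, x i.succ.castSucc ^ 2) + (1 + x (Fin.last (k + 1))) ^ 2))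
            ^ ((k : ℝ) + 4) *
          (x 0 ^ 4 * x (Fin.last (k + 1)) ^ 4 / (1 + x (Fin.last (k + 1)))))
      = 18 * Real.pi ^ (((k : ℝ) + 1) / 2) * Real.Gamma (((k : ℝ) + 3) / 2) *
          Real.Gamma ((k : ℝ) - 1) / Real.Gamma ((k : ℝ) + 4) ^ 2 := by
    rw [integral_eq_lintegral_of_nonneg_ae, lintegral_value hk, ENNReal.toReal_ofReal]
    · positivity
    · filter_upwards [ae_restrict_mem hset] with x hx
      have hx' : 0 < x (Fin.last (k + 1)) := hx
      have : 0 ≤ ∑ i : Fin k, x i.succ.castSucc ^ 2 := Finset.sum_nonneg fun i _ => sq_nonneg _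
      simp only [Pi.zero_apply]
      positivity
    · exact Measurable.aestronglyMeasurable (by fun_prop)
  have hcongr : ∫ x in (WithLp.toLp 2) ⁻¹'
        {x : EuclideanSpace ℝ (Fin (k + 2)) | 0 < x (Fin.last (k + 1))},
        ‖WithLp.toLp 2 x + EuclideanSpace.single (Fin.last (k + 1)) (1 : ℝ)‖
            ^ (-(2 * ((k + 2 : ℕ) : ℝ) + 4))
          * (x 0 ^ 4 * x (Fin.last (k + 1)) ^ 4 / (1 + x (Fin.last (k + 1))))
      = ∫ x in {x : Fin (k + 2) → ℝ | 0 < x (Fin.last (k + 1))},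
        ((1 / (x 0 ^ 2 + (∑ i : Fin k, x i.succ.castSucc ^ 2) + (1 + x (Fin.last (k + 1))) ^ 2))
            ^ ((k : ℝ) + 4) *
          (x 0 ^ 4 * x (Fin.last (k + 1)) ^ 4 / (1 + x (Fin.last (k + 1))))) := by
    refine setIntegral_congr_fun hset fun x hx => ?_
    simp only []
    congr 1
    have hx' : 0 < x (Fin.last (k + 1)) := hx
    have h0 : 0 ≤ ∑ i : Fin k, x i.succ.castSucc ^ 2 := Finset.sum_nonneg fun i _ => sq_nonneg _
    have h1 : ∀ i : Fin k, i.succ.castSucc ≠ Fin.last (k + 1) := fun i =>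
      (Fin.castSucc_lt_last _).ne
    have h2 : (0 : Fin (k + 2)) ≠ Fin.last (k + 1) := by simp [Fin.ext_iff]
    rw [EuclideanSpace.norm_eq, Fin.sum_univ_castSucc, Fin.sum_univ_succ]
    simp only [PiLp.add_apply, PiLp.single_apply, Fin.castSucc_zero, h1, h2, if_false,
      if_true, add_zero, Real.norm_eq_abs, sq_abs]
    rw [add_comm (x (Fin.last (k + 1))) 1, Real.sqrt_eq_rpow, ← Real.rpow_mul (by positivity),
      one_div (_ + _ : ℝ), Real.inv_rpow (by positivity), ← Real.rpow_neg (by positivity)]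
    congr 1
    push_cast
    ring
  have e2 : Real.Gamma ((k : ℝ) + 2) = ((k + 1) * k * (k - 1)) * Real.Gamma ((k : ℝ) - 1) := by
    rw [show (k : ℝ) + 2 = k - 1 + 1 + 1 + 1 by ring, Real.Gamma_add_one (by linarith),
      Real.Gamma_add_one (by linarith), Real.Gamma_add_one (by linarith)]
    ring
  have e4 : Real.Gamma ((k : ℝ) + 4) = (k + 3) * (k + 2) * ((k + 1) * k * (k - 1)) *
      Real.Gamma ((k : ℝ) - 1) := by
    rw [show (k : ℝ) + 4 = k + 2 + 1 + 1 by ring, Real.Gamma_add_one (by linarith),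
      Real.Gamma_add_one (by linarith), e2]
    ring
  refine (congrArg _ (hcongr.trans hint)).trans ?_
  rw [sphereVol, realBeta, e4, Nat.add_sub_cancel]
  push_cast
  rw [show ((k : ℝ) + 2 - 1) / 2 = (k + 1) / 2 by ring,
    show ((k : ℝ) + 2 + 1) / 2 = (k + 3) / 2 by ring,
    show ((k : ℝ) + 1) / 2 + (k + 3) / 2 = k + 2 by ring, e2,
    show (k : ℝ) + 2 + 1 = k + 3 by ring, show (k : ℝ) + 2 - 1 = k + 1 by ring,
    show (k : ℝ) + 2 - 2 = k by ring, show (k : ℝ) + 2 - 3 = k - 1 by ring]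
  have hk1 : (k : ℝ) - 1 ≠ 0 := by linarith
  field_simp
  ring
end
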